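/- arXiv:1803.04276 — 3 statements merged into one kernel-verified Lean document; each statement's English description precedes it below -/
import Mathlib

section
/- Let L_n be a triangulated Laman graph on n ≥ 3 vertices and let (L_n,p) be a framework in the plane with p_1,…,p_n pairwise distinct. If (L_n,p) is strongly nondegenerate, then (L_n,p) is globally angle rigid: there exists an angle index set T ⊆ T_{L_n} such that f_T^{-1}(f_T(p)) = f_K^{-1}(f_K(p)), i.e., every configuration q whose angle cosines indexed by T agree with those of p has all of its angle cosines (over the complete graph) agreeing with those of p. -/
open Matrix Real

/-- Points in the plane. -/
abbrev Vec2 := Fin 2 → ℝ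

/-- Euclidean norm of a planar vector. -/
noncomputable def nrm (x : Vec2) : ℝ := Real.sqrt (x ⬝ᵥ x)

/-- The bearing `g(x,y) = (x - y)/‖x - y‖`. -/
noncomputable def brg (x y : Vec2) : Vec2 := (nrm (x - y))⁻¹ • (x - y)

/-- Triangulated Laman graphs on vertex set `{0, …, n-1}` (edges stored as symmetric
pairs). -/
inductive IsTLGraph : ℕ → Finset (ℕ × ℕ) → Prop
  | base : IsTLGraph 2 {(0, 1), (1, 0)}
  | step {n : ℕ} {E : Finset (ℕ × ℕ)} {i j : ℕ} :
      IsTLGraph n E → (i, j) ∈ E →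
      IsTLGraph (n + 1) (E ∪ {(n, i), (i, n), (n, j), (j, n)})

/-- Extension of a configuration on `Fin n` to all of `ℕ` (junk value `0` outside). -/
noncomputable def ext {n : ℕ} (p : Fin n → Vec2) (i : ℕ) : Vec2 :=
  if h : i < n then p ⟨i, h⟩ else 0

/-- Cosine of the angle at vertex `t.1` between the edges towards `t.2.1` and `t.2.2`. -/
noncomputable def angCosN {n : ℕ} (p : Fin n → Vec2) (t : ℕ × ℕ × ℕ) : ℝ :=
  brg (ext p t.1) (ext p t.2.1) ⬝ᵥ brg (ext p t.1) (ext p t.2.2)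

/-- A framework is strongly nondegenerate if the points of every triangle of the graph
are not collinear. -/
def StronglyNondeg {n : ℕ} (E : Finset (ℕ × ℕ)) (p : Fin n → Vec2) : Prop :=
  ∀ i j k : ℕ, (i, j) ∈ E → (j, k) ∈ E → (i, k) ∈ E →
    ¬ Collinear ℝ ({ext p i, ext p j, ext p k} : Set Vec2)


/-- squared length -/
noncomputable def sqN (x : Vec2) : ℝ := x ⬝ᵥ x

/-- planar cross product -/
noncomputable def crs (x y : Vec2) : ℝ := x 0 * y 1 - x 1 * y 0

/-- cosine between two vectors -/
noncomputable def cosv (x y : Vec2) : ℝ := (nrm x)⁻¹ * (nrm y)⁻¹ * (x ⬝ᵥ y)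

lemma dp (x y : Vec2) : x ⬝ᵥ y = x 0 * y 0 + x 1 * y 1 := by
  simp [dotProduct, Fin.sum_univ_two]

lemma sqN_eq (x : Vec2) : sqN x = x 0 ^ 2 + x 1 ^ 2 := by
  rw [sqN, dp]; ring

lemma sqN_pos {x : Vec2} (h : x ≠ 0) : 0 < sqN x := by
  rw [sqN_eq]
  by_contra hc
  apply h
  have h0 : x 0 = 0 := by nlinarith [sq_nonneg (x 0), sq_nonneg (x 1)]
  have h1 : x 1 = 0 := by nlinarith [sq_nonneg (x 0), sq_nonneg (x 1)]
  ext i; fin_cases i <;> simp [h0, h1]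

lemma nrm_pos {x : Vec2} (h : x ≠ 0) : 0 < nrm x := Real.sqrt_pos.2 (sqN_pos h)

lemma nrm_sq (x : Vec2) : nrm x ^ 2 = sqN x := by
  rw [nrm, Real.sq_sqrt]; rfl
  have := sqN_eq x
  rw [sqN] at this; rw [this]; positivity

lemma brg_dot (a b c : Vec2) : brg a b ⬝ᵥ brg a c = cosv (a - b) (a - c) := by
  simp only [brg, cosv, smul_dotProduct, dotProduct_smul, smul_eq_mul]; ring

lemma cosv_comm (x y : Vec2) : cosv x y = cosv y x := by
  rw [cosv, cosv, dotProduct_comm]; ring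

lemma nrm_scale {x x' : Vec2} {l : ℝ} (hl : 0 < l) (h : sqN x' = l * sqN x) :
    nrm x' = √l * nrm x := by
  have h' : x' ⬝ᵥ x' = l * (x ⬝ᵥ x) := h
  rw [nrm, nrm, h', Real.sqrt_mul hl.le]

lemma polar (x y : Vec2) : x ⬝ᵥ y = (sqN x + sqN y - sqN (x - y)) / 2 := by
  simp only [dp, sqN_eq, Pi.sub_apply]; ring

lemma cosv_scale {x y x' y' : Vec2} {l : ℝ} (hl : 0 < l) (h1 : sqN x' = l * sqN x)
    (h2 : sqN y' = l * sqN y) (h3 : sqN (x' - y') = l * sqN (x - y)) :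
    cosv x' y' = cosv x y := by
  have hd : x' ⬝ᵥ y' = l * (x ⬝ᵥ y) := by rw [polar, polar, h1, h2, h3]; ring
  rw [cosv, cosv, nrm_scale hl h1, nrm_scale hl h2, hd, mul_inv, mul_inv]
  have hs : √l * √l = l := Real.mul_self_sqrt hl.le
  have h0 : √l ≠ 0 := (Real.sqrt_pos.2 hl).ne'
  calc _ = ((√l)⁻¹ * (√l)⁻¹ * l) * ((nrm x)⁻¹ * (nrm y)⁻¹ * (x ⬝ᵥ y)) := by ring
    _ = _ := by
      have : (√l)⁻¹ * (√l)⁻¹ * l = 1 := by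
        nth_rewrite 3 [← hs]; field_simp
      rw [this, one_mul]

lemma dot_of_cosv {x y x' y' : Vec2} {l : ℝ} (hl : 0 < l) (hx : x ≠ 0) (hy : y ≠ 0)
    (h1 : sqN x' = l * sqN x)
    (h2 : sqN y' = l * sqN y) (h3 : cosv x' y' = cosv x y) :
    x' ⬝ᵥ y' = l * (x ⬝ᵥ y) := by
  rw [cosv, cosv, nrm_scale hl h1, nrm_scale hl h2] at h3
  have hs : √l ^ 2 = l := Real.sq_sqrt hl.le
  have h0 : √l ≠ 0 := (Real.sqrt_pos.2 hl).ne'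
  have hx := (nrm_pos hx).ne'
  have hy := (nrm_pos hy).ne'
  field_simp at h3
  rw [h3, hs]

lemma crs_sq (x y : Vec2) : crs x y ^ 2 = sqN x * sqN y - (x ⬝ᵥ y) ^ 2 := by
  simp only [crs, dp, sqN_eq]; ring

lemma cos_cross {x y x' y' : Vec2} (hx : x ≠ 0) (hy : y ≠ 0) (hx' : x' ≠ 0) (hy' : y' ≠ 0)
    (h : cosv x' y' = cosv x y) :
    crs x' y' ^ 2 * (sqN x * sqN y) = crs x y ^ 2 * (sqN x' * sqN y') := by
  have k1 := (nrm_pos hx).ne'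
  have k2 := (nrm_pos hy).ne'
  have k3 := (nrm_pos hx').ne'
  have k4 := (nrm_pos hy').ne'
  rw [cosv, cosv] at h
  field_simp at h
  have h2 : (x' ⬝ᵥ y') ^ 2 * (sqN x * sqN y) = (x ⬝ᵥ y) ^ 2 * (sqN x' * sqN y') := by
    simp only [← nrm_sq]
    linear_combination ((x' ⬝ᵥ y') * (nrm x * nrm y) + (x ⬝ᵥ y) * (nrm x' * nrm y')) * h
  rw [crs_sq, crs_sq]; linear_combination -h2

/-- triangle lemma -/
lemma tri {a b c a' b' c' : Vec2} (hD : crs (a - b) (a - c) ≠ 0)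
    (h1 : a' ≠ b') (h2 : a' ≠ c') (h3 : b' ≠ c')
    (ha : cosv (a' - b') (a' - c') = cosv (a - b) (a - c))
    (hb : cosv (b' - a') (b' - c') = cosv (b - a) (b - c))
    (hc : cosv (c' - a') (c' - b') = cosv (c - a) (c - b)) :
    ∃ l : ℝ, 0 < l ∧ sqN (a' - b') = l * sqN (a - b) ∧ sqN (a' - c') = l * sqN (a - c) ∧
      sqN (b' - c') = l * sqN (b - c) := by
  have hab : a ≠ b := by rintro rfl; simp [crs] at hD
  have hac : a ≠ c := by rintro rfl; simp [crs] at hD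
  have hbc : b ≠ c := by
    rintro rfl; apply hD; simp only [crs]; ring
  have sy : ∀ x y : Vec2, sqN (x - y) = sqN (y - x) := by
    intro x y; simp only [sqN_eq, Pi.sub_apply]; ring
  have e1 := cos_cross (sub_ne_zero.2 hab) (sub_ne_zero.2 hac) (sub_ne_zero.2 h1)
    (sub_ne_zero.2 h2) ha
  have e2 := cos_cross (sub_ne_zero.2 hab.symm) (sub_ne_zero.2 hbc) (sub_ne_zero.2 h1.symm)
    (sub_ne_zero.2 h3) hb
  have e3 := cos_cross (sub_ne_zero.2 hac.symm) (sub_ne_zero.2 hbc.symm) (sub_ne_zero.2 h2.symm)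
    (sub_ne_zero.2 h3.symm) hc
  have c2 : ∀ a b c : Vec2, crs (b - a) (b - c) ^ 2 = crs (a - b) (a - c) ^ 2 := by
    intro a b c; simp only [crs, Pi.sub_apply]; ring
  have c3 : ∀ a b c : Vec2, crs (c - a) (c - b) ^ 2 = crs (a - b) (a - c) ^ 2 := by
    intro a b c; simp only [crs, Pi.sub_apply]; ring
  rw [c2 a b c, c2 a' b' c', sy b a, sy b' a'] at e2
  rw [c3 a b c, c3 a' b' c', sy c a, sy c' a', sy c b, sy c' b'] at e3
  have p1 := sqN_pos (sub_ne_zero.2 hab)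
  have p2 := sqN_pos (sub_ne_zero.2 hac)
  have p3 := sqN_pos (sub_ne_zero.2 hbc)
  have q1 := sqN_pos (sub_ne_zero.2 h1)
  have q2 := sqN_pos (sub_ne_zero.2 h2)
  have q3 := sqN_pos (sub_ne_zero.2 h3)
  have hD2 : 0 < crs (a - b) (a - c) ^ 2 := by positivity
  generalize crs (a - b) (a - c) ^ 2 = D at *
  generalize crs (a' - b') (a' - c') ^ 2 = D' at *
  generalize sqN (a - b) = x at *
  generalize sqN (a - c) = y at *
  generalize sqN (b - c) = z at *
  generalize sqN (a' - b') = x' at *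
  generalize sqN (a' - c') = y' at *
  generalize sqN (b' - c') = z' at *
  have r1 : x' * y = y' * x := by
    have : (D * z * z') * (x' * y) = (D * z * z') * (y' * x) := by
      linear_combination (z * x) * e3 - (z * y) * e2
    exact mul_left_cancel₀ (by positivity) this
  have r2 : x' * z = z' * x := by
    have : (D * y * y') * (x' * z) = (D * y * y') * (z' * x) := by
      linear_combination (y * x) * e3 - (z * y) * e1
    exact mul_left_cancel₀ (by positivity) this
  refine ⟨x' / x, by positivity, by field_simp, ?_, ?_⟩
  · field_simp; linarith
  · field_simp; linarith

lemma extend {u w v x u' w' v' x' : Vec2} {l : ℝ} (hl : 0 < l) (hD : crs u w ≠ 0)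
    (huu : u' ⬝ᵥ u' = l * (u ⬝ᵥ u)) (hww : w' ⬝ᵥ w' = l * (w ⬝ᵥ w))
    (hxx : x' ⬝ᵥ x' = l * (x ⬝ᵥ x)) (huw : u' ⬝ᵥ w' = l * (u ⬝ᵥ w))
    (hux : u' ⬝ᵥ x' = l * (u ⬝ᵥ x)) (hwx : w' ⬝ᵥ x' = l * (w ⬝ᵥ x))
    (hvu : v' ⬝ᵥ u' = l * (v ⬝ᵥ u)) (hvw : v' ⬝ᵥ w' = l * (v ⬝ᵥ w)) :
    v' ⬝ᵥ x' = l * (v ⬝ᵥ x) := by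
  obtain ⟨α, β, hx⟩ : ∃ α β : ℝ, x = α • u + β • w := by
    refine ⟨crs x w / crs u w, crs u x / crs u w, ?_⟩
    ext i
    fin_cases i <;> simp <;> field_simp <;> simp only [crs] <;> ring
  have hx' : x' = α • u' + β • w' := by
    by_contra hne
    have := sqN_pos (sub_ne_zero.2 hne)
    have hz : sqN (x' - (α • u' + β • w')) = l * sqN (x - (α • u + β • w)) := by
      simp only [sqN_eq, dp, Pi.sub_apply, Pi.add_apply, Pi.smul_apply, smul_eq_mul] at *
      linear_combination hxx + α ^ 2 * huu + β ^ 2 * hww - 2 * α * hux - 2 * β * hwx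
        + 2 * α * β * huw
    rw [hz, hx] at this
    simp [sqN] at this
  rw [hx', hx]
  simp only [dotProduct_add, dotProduct_smul, smul_eq_mul, hvu, hvw]; ring

lemma tl_ge {n : ℕ} {E : Finset (ℕ × ℕ)} (h : IsTLGraph n E) : 2 ≤ n := by
  induction h with
  | base => exact le_rfl
  | step _ _ ih => omega

lemma tl_edge {n : ℕ} {E : Finset (ℕ × ℕ)} (h : IsTLGraph n E) :
    ∀ a b, (a, b) ∈ E → a < n ∧ b < n ∧ a ≠ b ∧ (b, a) ∈ E := by
  induction h with
  | base => intro a b; simp; omega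
  | @step n E i j h hij ih =>
    intro a b hab
    have := ih i j hij
    simp only [Finset.mem_union, Finset.mem_insert, Finset.mem_singleton, Prod.mk.injEq] at hab ⊢
    rcases hab with hab | hab
    · have := ih a b hab
      exact ⟨by omega, by omega, this.2.2.1, Or.inl this.2.2.2⟩
    · refine ⟨by omega, by omega, by omega, Or.inr (by omega)⟩

lemma tl_tri {n : ℕ} {E : Finset (ℕ × ℕ)} (h : IsTLGraph n E) :
    ∀ a b, (a, b) ∈ E → (∃ k, (a, k) ∈ E ∧ (b, k) ∈ E) ∨ n = 2 := by
  induction h with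
  | base => intro a b _; exact Or.inr rfl
  | @step n E i j h hij ih =>
    intro a b hab
    left
    have hi := tl_edge h i j hij
    have hji := hi.2.2.2
    simp only [Finset.mem_union, Finset.mem_insert, Finset.mem_singleton, Prod.mk.injEq] at hab ⊢
    rcases hab with hab | ⟨rfl, rfl⟩ | ⟨rfl, rfl⟩ | ⟨rfl, rfl⟩ | ⟨rfl, rfl⟩
    · rcases ih a b hab with ⟨k, h1, h2⟩ | h2
      · exact ⟨k, Or.inl h1, Or.inl h2⟩
      · have := tl_edge h a b hab
        refine ⟨n, Or.inr (by omega), Or.inr (by omega)⟩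
    · exact ⟨j, by simp, Or.inl hij⟩
    · exact ⟨j, Or.inl hij, by simp⟩
    · exact ⟨i, by simp, Or.inl hji⟩
    · exact ⟨i, Or.inl hji, by simp⟩

lemma crs_ne_of_not_collinear {a b c : Vec2} (h : ¬ Collinear ℝ ({a, b, c} : Set Vec2)) :
    crs (a - b) (a - c) ≠ 0 := by
  intro h0
  apply h
  by_cases hab : a = b
  · subst hab; simp [collinear_pair]
  have hN := (sqN_pos (sub_ne_zero.2 hab)).ne'
  rw [collinear_iff_of_mem (p₀ := a) (by simp)]
  refine ⟨a - b, ?_⟩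
  intro p hp
  simp only [Set.mem_insert_iff, Set.mem_singleton_iff] at hp
  rcases hp with rfl | rfl | rfl
  · exact ⟨0, by simp⟩
  · exact ⟨-1, by simp⟩
  · refine ⟨-((a - b) ⬝ᵥ (a - p)) / sqN (a - b), ?_⟩
    ext i
    simp only [crs, Pi.sub_apply] at h0
    fin_cases i <;> simp <;> field_simp <;> simp only [sqN_eq, dp, Pi.sub_apply]
    · linear_combination (a 1 - b 1) * h0
    · linear_combination -(a 0 - b 0) * h0

lemma sqN_sub_comm (x y : Vec2) : sqN (x - y) = sqN (y - x) := by
  simp only [sqN_eq, Pi.sub_apply]; ring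

lemma sqN_self (x : Vec2) : sqN (x - x) = 0 := by simp [sqN]

lemma tl_main {n : ℕ} {E : Finset (ℕ × ℕ)} (h : IsTLGraph n E) (P Q : ℕ → Vec2) :
    3 ≤ n →
    (∀ i j k : ℕ, (i, j) ∈ E → (j, k) ∈ E → (i, k) ∈ E → crs (P i - P j) (P i - P k) ≠ 0) →
    (∀ i j, (i, j) ∈ E → Q i ≠ Q j) →
    (∀ i j k, (i, j) ∈ E → (i, k) ∈ E → j ≠ k →
      cosv (Q i - Q j) (Q i - Q k) = cosv (P i - P j) (P i - P k)) →
    ∃ l : ℝ, 0 < l ∧ ∀ i j, i < n → j < n → sqN (Q i - Q j) = l * sqN (P i - P j) := by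
  induction h with
  | base => intro h; omega
  | @step n E i j h hij ih =>
    intro _ hP hQ hA
    have hsub : ∀ e, e ∈ E → e ∈ E ∪ {(n, i), (i, n), (n, j), (j, n)} :=
      fun e he => Finset.mem_union_left _ he
    have hn2 := tl_ge h
    obtain ⟨hi, hj, hne, hji⟩ := tl_edge h i j hij
    have m1 : (n, i) ∈ E ∪ {(n, i), (i, n), (n, j), (j, n)} := by simp
    have m2 : (i, n) ∈ E ∪ {(n, i), (i, n), (n, j), (j, n)} := by simp
    have m3 : (n, j) ∈ E ∪ {(n, i), (i, n), (n, j), (j, n)} := by simp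
    have m4 : (j, n) ∈ E ∪ {(n, i), (i, n), (n, j), (j, n)} := by simp
    have m5 := hsub _ hij
    have m6 := hsub _ hji
    have hD := hP i j n m5 m4 m2
    obtain ⟨μ, hμ, t1, t2, t3⟩ := tri hD (hQ _ _ m5) (hQ _ _ m2) (hQ _ _ m4)
      (hA i j n m5 m2 hj.ne) (hA j i n m6 m4 hi.ne) (hA n i j m1 m3 hne)
    by_cases hn : n = 2
    · refine ⟨μ, hμ, ?_⟩
      have hc : ∀ a, a < n + 1 → a = i ∨ a = j ∨ a = n := by intro a ha; omega
      intro a b ha hb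
      rcases hc a ha with rfl | rfl | rfl <;> rcases hc b hb with rfl | rfl | rfl <;>
        first
        | (rw [sqN_self, sqN_self, mul_zero])
        | assumption
        | (rw [sqN_sub_comm, sqN_sub_comm (P _)]; assumption)
    · obtain ⟨l, hl, hd⟩ := ih (by omega)
        (fun a b c h1 h2 h3 => hP a b c (hsub _ h1) (hsub _ h2) (hsub _ h3))
        (fun a b h1 => hQ a b (hsub _ h1))
        (fun a b c h1 h2 h3 => hA a b c (hsub _ h1) (hsub _ h2) h3)
      obtain ⟨k, hik, hjk⟩ := (tl_tri h i j hij).resolve_right hn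
      obtain ⟨_, hk, hnik, hki⟩ := tl_edge h i k hik
      have hDk := hP i j k m5 (hsub _ hjk) (hsub _ hik)
      have hPij : P i - P j ≠ 0 := by intro h0; rw [h0] at hD; simp [crs] at hD
      have hPin : P i - P n ≠ 0 := by intro h0; rw [h0] at hD; simp [crs] at hD
      have hPik : P i - P k ≠ 0 := by intro h0; rw [h0] at hDk; simp [crs] at hDk
      have hμl : μ = l := by
        have := hd i j hi hj
        rw [t1] at this
        exact mul_right_cancel₀ (sqN_pos hPij).ne' this
      subst hμl
      have hdot : ∀ a b, a < n → b < n →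
          (Q i - Q a) ⬝ᵥ (Q i - Q b) = μ * ((P i - P a) ⬝ᵥ (P i - P b)) := by
        intro a b ha hb
        rw [polar, polar, sub_sub_sub_cancel_left, sub_sub_sub_cancel_left, hd i a hi ha,
          hd i b hi hb, hd b a hb ha]
        ring
      have hnj : (Q i - Q n) ⬝ᵥ (Q i - Q j) = μ * ((P i - P n) ⬝ᵥ (P i - P j)) := by
        rw [polar, polar, sub_sub_sub_cancel_left, sub_sub_sub_cancel_left, t1, t2, t3]
        ring
      have hnk := dot_of_cosv hμ hPin hPik t2 (hd i k hi hk)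
        (hA i n k m2 (hsub _ hik) hk.ne')
      have key : ∀ a, a < n → sqN (Q n - Q a) = μ * sqN (P n - P a) := by
        intro a ha
        have := extend hμ hDk (hdot j j hj hj) (hdot k k hk hk) (hdot a a ha ha)
          (hdot j k hj hk) (hdot j a hj ha) (hdot k a hk ha) hnj hnk
        rw [polar, polar, sub_sub_sub_cancel_left, sub_sub_sub_cancel_left, t2,
          hd i a hi ha, sqN_sub_comm (Q a), sqN_sub_comm (P a)] at this
        linarith
      refine ⟨μ, hμ, ?_⟩
      intro a b ha hb
      rcases Nat.lt_succ_iff_lt_or_eq.1 ha with ha | rfl <;>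
        rcases Nat.lt_succ_iff_lt_or_eq.1 hb with hb | rfl
      · exact hd a b ha hb
      · rw [sqN_sub_comm, sqN_sub_comm (P _)]; exact key a ha
      · exact key b hb
      · rw [sqN_self, sqN_self, mul_zero]

/-- a strongly nondegenerate framework on a triangulated Laman graph with
`n ≥ 3` vertices and pairwise distinct points is globally angle rigid: there is an angle
index set `T ⊆ T_{L_n}` such that `f_T⁻¹(f_T(p)) = f_K⁻¹(f_K(p))`, i.e. every
configuration whose `T`-angle cosines agree with those of `p` has all of its angle
cosines (over the complete graph) agreeing with those of `p`. -/
theorem tl_strongly_nondegenerate_implies_globally_angle_rigid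
    {n : ℕ} (hn : 3 ≤ n) (E : Finset (ℕ × ℕ)) (hTL : IsTLGraph n E)
    (p : Fin n → Vec2)
    (hp : ∀ i j : Fin n, i ≠ j → p i ≠ p j)
    (hsnd : StronglyNondeg E p) :
    ∃ T : Finset (ℕ × ℕ × ℕ),
      (∀ t ∈ T, (t.1, t.2.1) ∈ E ∧ (t.1, t.2.2) ∈ E ∧ t.2.1 < t.2.2) ∧
      {q : Fin n → Vec2 | (∀ e ∈ E, ext q e.1 ≠ ext q e.2) ∧
          ∀ t ∈ T, angCosN q t = angCosN p t} =
      {q : Fin n → Vec2 | (∀ i j : Fin n, i ≠ j → q i ≠ q j) ∧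
          ∀ i j k : ℕ, i < n → j < n → k < n → i ≠ j → i ≠ k → j ≠ k →
            angCosN q (i, j, k) = angCosN p (i, j, k)} := by
  classical
  have hext : ∀ (r : Fin n → Vec2) (a : ℕ) (ha : a < n), ext r a = r ⟨a, ha⟩ := by
    intro r a ha; simp [_root_.ext, ha]
  have hang : ∀ (r : Fin n → Vec2) (a b c : ℕ),
      angCosN r (a, b, c) = cosv (ext r a - ext r b) (ext r a - ext r c) := by
    intro r a b c; simp only [angCosN, brg_dot]
  refine ⟨((E ×ˢ E).filter (fun x => x.1.1 = x.2.1 ∧ x.1.2 < x.2.2)).image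
    (fun x => (x.1.1, x.1.2, x.2.2)), ?_, ?_⟩
  · intro t ht
    simp only [Finset.mem_image, Finset.mem_filter, Finset.mem_product] at ht
    obtain ⟨⟨⟨a, b⟩, ⟨c, d⟩⟩, ⟨⟨h1, h2⟩, h3, h4⟩, rfl⟩ := ht
    simp only at h3 h4 ⊢
    subst h3
    exact ⟨h1, h2, h4⟩
  · apply Set.Subset.antisymm
    · rintro q ⟨hq, hT⟩
      have hA0 : ∀ i j k, (i, j) ∈ E → (i, k) ∈ E → j < k →
          cosv (ext q i - ext q j) (ext q i - ext q k) =
          cosv (ext p i - ext p j) (ext p i - ext p k) := by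
        intro i j k h1 h2 h3
        rw [← hang, ← hang]
        apply hT
        simp only [Finset.mem_image, Finset.mem_filter, Finset.mem_product]
        exact ⟨((i, j), (i, k)), ⟨⟨h1, h2⟩, rfl, h3⟩, rfl⟩
      obtain ⟨l, hl, hd⟩ := tl_main hTL (ext p) (ext q) hn
        (fun i j k h1 h2 h3 => crs_ne_of_not_collinear (hsnd i j k h1 h2 h3))
        (fun i j h1 => hq (i, j) h1)
        (by
          intro i j k h1 h2 h3
          rcases lt_or_gt_of_ne h3 with h | h
          · exact hA0 i j k h1 h2 h
          · rw [cosv_comm, cosv_comm (ext p i - _)]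
            exact hA0 i k j h2 h1 h)
      refine ⟨?_, ?_⟩
      · intro i j hij heq
        have h1 := hd i j i.2 j.2
        rw [hext _ _ i.2, hext _ _ j.2, hext _ _ i.2, hext _ _ j.2] at h1
        simp only [Fin.eta] at h1
        rw [heq, sqN_self] at h1
        have := mul_pos hl (sqN_pos (sub_ne_zero.2 (hp i j hij)))
        linarith
      · intro i j k hi hj hk _ _ _
        rw [hang, hang]
        apply cosv_scale hl (hd i j hi hj) (hd i k hi hk)
        rw [sub_sub_sub_cancel_left, sub_sub_sub_cancel_left]
        exact hd k j hk hj
    · rintro q ⟨hq, hK⟩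
      refine ⟨?_, ?_⟩
      · rintro ⟨a, b⟩ he
        obtain ⟨ha, hb, hab, _⟩ := tl_edge hTL a b he
        simp only
        rw [hext _ _ ha, hext _ _ hb]
        apply hq
        simpa using hab
      · intro t ht
        simp only [Finset.mem_image, Finset.mem_filter, Finset.mem_product] at ht
        obtain ⟨⟨⟨a, b⟩, ⟨c, d⟩⟩, ⟨⟨h1, h2⟩, h3, h4⟩, rfl⟩ := ht
        simp only at h3 h4 ⊢
        subst h3
        obtain ⟨ha, hb, hab, _⟩ := tl_edge hTL a b h1
        obtain ⟨_, hd, had, _⟩ := tl_edge hTL a d h2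
        exact hK a b d ha hb hd hab had h4.ne
end

section
/- Let p ∈ ℝ^{2n} be a degenerate configuration (all points p_1,…,p_n lie on a common line) with p_i ≠ p_j whenever (i,j) ∈ E. Then the gradient of the formation cost function vanishes at p: ∇V_F(p) = 0. Consequently, if the initial condition of the gradient flow ṗ = −∇V_F(p) is degenerate, the solution is stationary: p(t) = p(0) for all t ≥ 0. -/
open Matrix Real

noncomputable section

/-- The configuration space `ℝ^{2n}` of `n` agents in the plane. -/
abbrev Conf (n : ℕ) := EuclideanSpace ℝ (Fin n × Fin 2)

/-- The position of agent `i` in a configuration (junk value `0` for `i ≥ n`). -/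
noncomputable def pt {n : ℕ} (P : Conf n) (i : ℕ) : Vec2 :=
  fun d => if h : i < n then P (⟨i, h⟩, d) else 0

/-- Cosine of the angle at vertex `t.1` between the edges towards `t.2.1` and `t.2.2`. -/
noncomputable def angCosP {n : ℕ} (P : Conf n) (t : ℕ × ℕ × ℕ) : ℝ :=
  brg (pt P t.1) (pt P t.2.1) ⬝ᵥ brg (pt P t.1) (pt P t.2.2)

/-- The formation cost function
`V_F(p) = (1/2) Σ_{(i,j,k) ∈ T_G^F} (g_ijᵀg_ik(p) − g_ijᵀg_ik(p*))²`. -/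
noncomputable def VF {n : ℕ} (TF : Finset (ℕ × ℕ × ℕ)) (Pstar P : Conf n) : ℝ :=
  (1 / 2) * ∑ t ∈ TF, (angCosP P t - angCosP Pstar t) ^ 2

lemma pt_contDiff {n : ℕ} (i : ℕ) (d : Fin 2) :
    ContDiff ℝ 2 (fun P : Conf n => pt P i d) := by
  unfold pt
  by_cases h : i < n
  · simp only [h, dite_true]
    fun_prop
  · simp only [h, dite_false]
    exact contDiff_const

lemma dot_self_pos {x : Vec2} (h : x ≠ 0) : 0 < x ⬝ᵥ x := by
  rcases lt_or_eq_of_le (show 0 ≤ x ⬝ᵥ x by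
    simp only [dotProduct, Fin.sum_univ_two]; nlinarith [mul_self_nonneg (x 0), mul_self_nonneg (x 1)]) with h1 | h1
  · exact h1
  · exact absurd (dotProduct_self_eq_zero.1 h1.symm) h

lemma brg_contDiffAt {n : ℕ} (P : Conf n) (i j : ℕ) (d : Fin 2) (h : pt P i ≠ pt P j) :
    ContDiffAt ℝ 2 (fun Q : Conf n => brg (pt Q i) (pt Q j) d) P := by
  have hp := dot_self_pos (sub_ne_zero.2 h)
  have hc : ∀ d, ContDiffAt ℝ 2 (fun Q : Conf n => pt Q i d - pt Q j d) P := fun d =>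
    ((pt_contDiff i d).sub (pt_contDiff j d)).contDiffAt
  have hn : ContDiffAt ℝ 2 (fun Q : Conf n => (pt Q i - pt Q j) ⬝ᵥ (pt Q i - pt Q j)) P := by
    simp only [dotProduct, Fin.sum_univ_two, Pi.sub_apply]
    exact ((hc 0).mul (hc 0)).add ((hc 1).mul (hc 1))
  have hs := (hn.sqrt hp.ne').inv (Real.sqrt_pos.2 hp).ne'
  exact hs.mul (hc d)

lemma ang_contDiffAt {n : ℕ} (P : Conf n) (t : ℕ × ℕ × ℕ) (h1 : pt P t.1 ≠ pt P t.2.1)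
    (h2 : pt P t.1 ≠ pt P t.2.2) :
    ContDiffAt ℝ 2 (fun Q : Conf n => angCosP Q t) P := by
  unfold angCosP
  simp only [dotProduct, Fin.sum_univ_two]
  exact ((brg_contDiffAt P _ _ 0 h1).mul (brg_contDiffAt P _ _ 0 h2)).add
    ((brg_contDiffAt P _ _ 1 h1).mul (brg_contDiffAt P _ _ 1 h2))

lemma brg_self {x y : Vec2} (h : x ≠ y) : brg x y ⬝ᵥ brg x y = 1 := by
  have hp := dot_self_pos (sub_ne_zero.2 h)
  have hs := Real.sq_sqrt hp.le
  have h0 := (Real.sqrt_pos.2 hp).ne'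
  simp only [brg, nrm, smul_dotProduct, dotProduct_smul, smul_eq_mul]
  field_simp
  exact hs.symm

lemma brg_self_le (x y : Vec2) : brg x y ⬝ᵥ brg x y ≤ 1 := by
  by_cases h : x = y
  · subst h; simp [brg]
  · exact (brg_self h).le

lemma ang_sq_le {n : ℕ} (P : Conf n) (t : ℕ × ℕ × ℕ) : -1 ≤ angCosP P t ∧ angCosP P t ≤ 1 := by
  have h1 := brg_self_le (pt P t.1) (pt P t.2.1)
  have h2 := brg_self_le (pt P t.1) (pt P t.2.2)
  unfold angCosP
  generalize brg (pt P t.1) (pt P t.2.1) = u at *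
  generalize brg (pt P t.1) (pt P t.2.2) = w at *
  simp only [dotProduct, Fin.sum_univ_two] at *
  constructor
  · nlinarith [sq_nonneg (u 0 + w 0), sq_nonneg (u 1 + w 1)]
  · nlinarith [sq_nonneg (u 0 - w 0), sq_nonneg (u 1 - w 1)]

lemma ang_fderiv {n : ℕ} (P : Conf n) (t : ℕ × ℕ × ℕ) (h1 : pt P t.1 ≠ pt P t.2.1)
    (h2 : pt P t.1 ≠ pt P t.2.2) (a b : ℝ) (v : Vec2) (ha : pt P t.1 - pt P t.2.1 = a • v)
    (hb : pt P t.1 - pt P t.2.2 = b • v) :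
    fderiv ℝ (fun Q : Conf n => angCosP Q t) P = 0 := by
  have hsq : angCosP P t = 1 ∨ angCosP P t = -1 := by
    have e1 := brg_self h1
    have e2 := brg_self h2
    have e3 : brg (pt P t.1) (pt P t.2.1) 0 * brg (pt P t.1) (pt P t.2.2) 1
        = brg (pt P t.1) (pt P t.2.1) 1 * brg (pt P t.1) (pt P t.2.2) 0 := by
      simp only [brg, ha, hb, Pi.smul_apply, smul_eq_mul]
      ring
    unfold angCosP
    generalize brg (pt P t.1) (pt P t.2.1) = u at *
    generalize brg (pt P t.1) (pt P t.2.2) = w at *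
    simp only [dotProduct, Fin.sum_univ_two] at *
    rw [← sub_eq_zero, ← add_eq_zero_iff_eq_neg, ← mul_eq_zero]
    linear_combination (w 0 * w 0 + w 1 * w 1) * e1 + e2
      - (u 0 * w 1 - u 1 * w 0) * e3
  rcases hsq with h | h
  · apply IsLocalMax.fderiv_eq_zero
    exact Filter.Eventually.of_forall fun Q => by
      simp only [h]; exact (ang_sq_le Q t).2
  · apply IsLocalMin.fderiv_eq_zero
    exact Filter.Eventually.of_forall fun Q => by
      simp only [h]; exact (ang_sq_le Q t).1

/-- at a degenerate configuration (all points collinear) the gradient of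
the formation cost vanishes; consequently any solution of the gradient flow starting at
a degenerate configuration is stationary. -/
theorem degenerate_configuration_is_equilibrium
    {n : ℕ} (E : Finset (ℕ × ℕ))
    (hV : ∀ e ∈ E, e.1 < n ∧ e.2 < n)
    (hsym : ∀ e ∈ E, (e.2, e.1) ∈ E)
    (hirr : ∀ e ∈ E, e.1 ≠ e.2)
    (TF : Finset (ℕ × ℕ × ℕ))
    (hTF : ∀ t : ℕ × ℕ × ℕ, t ∈ TF ↔
      ((t.1, t.2.1) ∈ E ∧ (t.2.1, t.2.2) ∈ E ∧ (t.1, t.2.2) ∈ E ∧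
        t.1 < t.2.2 ∧ t.2.1 < t.2.2))
    (Pstar : Conf n)
    (hPs : ∀ e ∈ E, pt Pstar e.1 ≠ pt Pstar e.2)
    (P : Conf n)
    (hP : ∀ e ∈ E, pt P e.1 ≠ pt P e.2)
    (hdeg : Collinear ℝ (Set.range fun i : Fin n => pt P i)) :
    gradient (VF TF Pstar) P = 0 ∧
    ∀ sol : ℝ → Conf n, sol 0 = P →
      (∀ t : ℝ, 0 ≤ t → HasDerivAt sol (-(gradient (VF TF Pstar) (sol t))) t) →
      ∀ t : ℝ, 0 ≤ t → sol t = P := by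
  have hA : ∀ t ∈ TF, pt P t.1 ≠ pt P t.2.1 ∧ pt P t.1 ≠ pt P t.2.2 := fun t ht =>
    ⟨hP _ ((hTF t).1 ht).1, hP _ ((hTF t).1 ht).2.2.1⟩
  have hC : ∀ t ∈ TF, ContDiffAt ℝ 2 (fun Q : Conf n => angCosP Q t) P := fun t ht =>
    ang_contDiffAt P t (hA t ht).1 (hA t ht).2
  have hVC : ContDiffAt ℝ 2 (VF TF Pstar) P := by
    unfold VF
    exact contDiffAt_const.mul
      (ContDiffAt.sum fun t ht => ((hC t ht).sub contDiffAt_const).pow 2)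
  have hF : ∀ t ∈ TF, HasFDerivAt (fun Q : Conf n => angCosP Q t)
      (0 : Conf n →L[ℝ] ℝ) P := by
    intro t ht
    have hd := ((hC t ht).differentiableAt (by norm_num)).hasFDerivAt
    obtain ⟨p0, v, hv⟩ := (collinear_iff_exists_forall_eq_smul_vadd _).1 hdeg
    have hq : ∀ i, i < n → ∃ r : ℝ, pt P i = r • v + p0 := fun i hi =>
      hv _ ⟨⟨i, hi⟩, rfl⟩
    have ht' := (hTF t).1 ht
    obtain ⟨a, ha⟩ := hq t.1 (hV _ ht'.1).1
    obtain ⟨b, hb⟩ := hq t.2.1 (hV _ ht'.1).2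
    obtain ⟨c, hc⟩ := hq t.2.2 (hV _ ht'.2.2.1).2
    rwa [ang_fderiv P t (hA t ht).1 (hA t ht).2 (a - b) (a - c) v
      (by rw [ha, hb]; module) (by rw [ha, hc]; module)] at hd
  have hG : gradient (VF TF Pstar) P = 0 := by
    have : HasFDerivAt (VF TF Pstar) (0 : Conf n →L[ℝ] ℝ) P := by
      have h := (HasFDerivAt.fun_sum (u := TF) fun t ht =>
        ((hF t ht).sub_const (angCosP Pstar t)).pow 2).const_mul (1 / 2 : ℝ)
      unfold VF
      simpa only [smul_zero, Finset.sum_const_zero] using h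
    rw [gradient, this.fderiv, map_zero]
  refine ⟨hG, fun sol h0 hsol T hT => ?_⟩
  have hL : ContDiffAt ℝ 1 (gradient (VF TF Pstar)) P := by
    have h := hVC.fderiv_right (m := 1) (by norm_num)
    exact (InnerProductSpace.toDual ℝ (Conf n)).symm.contDiff.contDiffAt.comp P h
  obtain ⟨K, s, hs, hK⟩ := hL.neg.exists_lipschitzOnWith
  have hcont : ContinuousOn sol (Set.Icc 0 T) := fun t ht =>
    (hsol t ht.1).continuousAt.continuousWithinAt
  have key : Set.Icc 0 T ⊆ {t | sol t = P} := by
    apply IsClosed.Icc_subset_of_forall_mem_nhdsWithin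
    · have := hcont.preimage_isClosed_of_isClosed isClosed_Icc (isClosed_singleton (x := P))
      rwa [Set.inter_comm] at this
    · exact h0
    · rintro t ⟨ht, ht0, -⟩
      have hc : ContinuousAt sol t := (hsol t ht0).continuousAt
      have hs' : ∀ᶠ u in nhds t, sol u ∈ s := hc.eventually_mem (by rw [ht]; exact hs)
      obtain ⟨ε, hε, hb⟩ := Metric.eventually_nhds_iff.1 hs'
      have hu := ODE_solution_unique_of_mem_Icc_right
        (v := fun _ => -gradient (VF TF Pstar)) (s := fun _ => s) (K := K)
        (f := sol) (g := fun _ => P) (a := t) (b := t + ε / 2)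
        (fun _ _ => hK)
        (fun u hu => (hsol u (ht0.trans hu.1)).continuousAt.continuousWithinAt)
        (fun u hu => (hsol u (ht0.trans hu.1)).hasDerivWithinAt)
        (fun u hu => hb (by
          rw [Real.dist_eq, abs_of_nonneg (by linarith [hu.1])]; linarith [hu.2]))
        continuousOn_const
        (fun u hu => by simpa [hG] using hasDerivWithinAt_const u (Set.Ici u) P)
        (fun u hu => mem_of_mem_nhds hs) ht
      exact Filter.mem_of_superset (Ioc_mem_nhdsGT (by linarith : t < t + ε / 2))
        fun u hu' => hu ⟨hu'.1.le, hu'.2⟩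
  exact key ⟨hT, le_rfl⟩
end
end

section
/- Consider n ≥ 3 agents with single-integrator dynamics ṗ_i = u_i in the plane under the gradient control u = −∇V_F(p), and suppose Assumption 1 holds: G contains a spanning triangulated Laman subgraph L_n such that (L_n,p*) is strongly nondegenerate. Let 𝓔 = 𝒮_{p*} = {q ∈ ℝ^{2n} : q_i = c·R·p*_i + ξ for all i, for some R ∈ O(2), c ∈ ℝ∖{0}, ξ ∈ ℝ²}. Then for every q ∈ 𝓔 there is a neighborhood U_q of q in ℝ^{2n} such that every solution of ṗ = −∇V_F(p) with p(0) ∈ U_q exists for all t ≥ 0 and converges as t → ∞ to some point p† ∈ 𝓔. -/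
open Matrix Real

noncomputable section

/-- A target framework is strongly nondegenerate if the points of every triangle of the
graph are not collinear. -/
def StronglyNondegP {n : ℕ} (E : Finset (ℕ × ℕ)) (P : Conf n) : Prop :=
  ∀ i j k : ℕ, (i, j) ∈ E → (j, k) ∈ E → (i, k) ∈ E →
    ¬ Collinear ℝ ({pt P i, pt P j, pt P k} : Set Vec2)

/-- The target shape set `𝓔 = 𝒮_{p*}`: all images of `p*` under translations, rotations,
reflections and nonzero scalings. -/
def targetSet {n : ℕ} (Pstar : Conf n) : Set (Conf n) :=
  {Q | ∃ c : ℝ, c ≠ 0 ∧ ∃ R ∈ Matrix.orthogonalGroup (Fin 2) ℝ, ∃ ξ : Vec2,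
    ∀ i : Fin n, pt Q i = c • R.mulVec (pt Pstar i) + ξ}



section Dyn
open Set Metric
open scoped NNReal

variable {X : Type*} [NormedAddCommGroup X] [InnerProductSpace ℝ X] [CompleteSpace X]

/-- Global existence for bounded Lipschitz vector fields. -/
theorem global_exist (f : X → X) (K M : ℝ≥0) (hK : LipschitzWith K f) (hM : ∀ x, ‖f x‖ ≤ M)
    (x0 : X) : ∃ sol : ℝ → X, sol 0 = x0 ∧ ∀ t, HasDerivAt sol (f (sol t)) t := by
  have h1 : ∀ N : ℕ, ∃ α : ℝ → X, α 0 = x0 ∧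
      ∀ t ∈ Ioo (-((N : ℝ) + 1)) ((N : ℝ) + 1), HasDerivAt α (f (α t)) t := by
    intro N
    have hN : (0 : ℝ) ≤ N := N.cast_nonneg
    have hp : IsPicardLindelof (fun _ => f) (tmin := -((N : ℝ) + 1)) (tmax := (N : ℝ) + 1)
        ⟨0, by constructor <;> linarith⟩ x0 (M * ((N : ℝ≥0) + 1)) 0 M K := by
      refine ⟨fun t _ => hK.lipschitzOnWith, fun x _ => continuousOn_const,
        fun t _ x _ => hM x, ?_⟩
      simp
    obtain ⟨α, h0, hα⟩ := hp.exists_eq_forall_mem_Icc_hasDerivWithinAt₀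
    exact ⟨α, h0, fun t ht => (hα t (Ioo_subset_Icc_self ht)).hasDerivAt
      (Icc_mem_nhds ht.1 ht.2)⟩
  choose α h0 hα using h1
  have huniq : ∀ N M : ℕ, N ≤ M → EqOn (α N) (α M) (Ioo (-((N : ℝ) + 1)) ((N : ℝ) + 1)) := by
    intro N M hNM
    have hN : (0 : ℝ) ≤ N := N.cast_nonneg
    have hNM' : (N : ℝ) ≤ M := by exact_mod_cast hNM
    refine ODE_solution_unique_of_mem_Ioo (v := fun _ => f) (s := fun _ => univ) (K := K)
      (t₀ := 0) (fun t _ => hK.lipschitzOnWith) (by constructor <;> linarith)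
      (fun t ht => ⟨hα N t ht, trivial⟩) (fun t ht => ⟨hα M t ?_, trivial⟩) (by rw [h0, h0])
    exact ⟨by linarith [ht.1], by linarith [ht.2]⟩
  have hmem : ∀ t : ℝ, t ∈ Ioo (-((⌈|t|⌉₊ : ℝ) + 1)) ((⌈|t|⌉₊ : ℝ) + 1) := by
    intro t
    have := Nat.le_ceil |t|
    have := abs_le.1 this
    constructor <;> linarith
  refine ⟨fun t => α ⌈|t|⌉₊ t, h0 _, fun t => ?_⟩
  have key : ∀ N : ℕ, ∀ s ∈ Ioo (-((N : ℝ) + 1)) ((N : ℝ) + 1), α ⌈|s|⌉₊ s = α N s := by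
    intro N s hs
    rcases le_total ⌈|s|⌉₊ N with h | h
    · exact huniq _ _ h (hmem s)
    · exact (huniq _ _ h hs).symm
  refine (hα ⌈|t|⌉₊ t (hmem t)).congr_of_eventuallyEq ?_
  filter_upwards [Ioo_mem_nhds (hmem t).1 (hmem t).2] with s hs
  exact key _ s hs

/-- Trapping on a finite interval. -/
theorem trap_interval {V : X → ℝ} {G F : X → X} {q : X} {R μ L : ℝ} (hμ : 0 < μ)
    (hL : 0 ≤ L)
    (hG : ∀ p ∈ ball q R, HasGradientAt V (G p) p)
    (hV0 : ∀ p, 0 ≤ V p)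
    (hlow : ∀ p ∈ ball q R, μ * V p ≤ ‖G p‖ ^ 2)
    (hup : ∀ p ∈ ball q R, ‖G p‖ ≤ L * √(V p))
    (hF : ∀ p ∈ ball q R, F p = -G p)
    {sol : ℝ → X} (hsol : ∀ t : ℝ, 0 ≤ t → HasDerivAt sol (F (sol t)) t)
    {T : ℝ} (hT : ∀ t, 0 ≤ t → t < T → sol t ∈ ball q R) :
    (∀ t, 0 ≤ t → t < T → V (sol t) ≤ V (sol 0) * exp (-(μ * t))) ∧
    (∀ s t, 0 ≤ s → s ≤ t → t ≤ T →
      ‖sol t - sol s‖ ≤ (2 * L / μ) * √(V (sol 0)) * exp (-(μ / 2 * s))) := by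
  have hder : ∀ t, 0 ≤ t → t < T → HasDerivAt (fun t => V (sol t)) (-‖G (sol t)‖ ^ 2) t := by
    intro t h0 h1
    have hb := hT t h0 h1
    have h2 := (hG _ hb).hasFDerivAt.comp_hasDerivAt t (hsol t h0)
    rw [hF _ hb] at h2
    refine h2.congr_deriv ?_
    simp
  have hdecay : ∀ t, 0 ≤ t → t < T → V (sol t) ≤ V (sol 0) * exp (-(μ * t)) := by
    have hd2 : ∀ t, 0 ≤ t → t < T → HasDerivAt (fun t => V (sol t) * exp (μ * t))
        (-‖G (sol t)‖ ^ 2 * exp (μ * t) + V (sol t) * (exp (μ * t) * μ)) t := by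
      intro t h0 h1
      refine (hder t h0 h1).mul ?_
      have := ((hasDerivAt_id t).const_mul μ).exp
      simpa using this
    have hanti : AntitoneOn (fun t => V (sol t) * exp (μ * t)) (Ico 0 T) := by
      apply antitoneOn_of_deriv_nonpos (convex_Ico 0 T)
      · exact fun t ht => (hd2 t ht.1 ht.2).continuousAt.continuousWithinAt
      · intro t ht
        rw [interior_Ico] at ht
        exact (hd2 t ht.1.le ht.2).differentiableAt.differentiableWithinAt
      · intro t ht
        rw [interior_Ico] at ht
        rw [(hd2 t ht.1.le ht.2).deriv]
        have := hlow _ (hT t ht.1.le ht.2)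
        have := exp_pos (μ * t)
        nlinarith
    intro t h0 h1
    have := hanti (show (0:ℝ) ∈ Ico 0 T from ⟨le_rfl, h0.trans_lt h1⟩) ⟨h0, h1⟩ h0
    simp only [mul_zero, exp_zero, mul_one] at this
    rw [Real.exp_neg, ← div_eq_mul_inv, le_div_iff₀ (exp_pos _)]
    exact this
  refine ⟨hdecay, fun s t hs hst htT => ?_⟩
  set C := (2 * L / μ) * √(V (sol 0)) with hC
  have hC0 : 0 ≤ C := by positivity
  have hB : ∀ x : ℝ, HasDerivAt (fun x => C * exp (-(μ / 2 * s)) - C * exp (-(μ / 2 * x)))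
      (L * √(V (sol 0)) * exp (-(μ / 2 * x))) x := by
    intro x
    have h1 := ((((hasDerivAt_id x).const_mul (μ/2)).neg).exp.const_mul C).const_sub
      (C * exp (-(μ / 2 * s)))
    refine h1.congr_deriv ?_
    simp [hC]
    field_simp
  have := image_norm_le_of_norm_deriv_right_le_deriv_boundary (a := s) (b := t)
    (f := fun x => sol x - sol s) (f' := fun x => F (sol x))
    (fun x hx => ((hsol x (hs.trans hx.1)).continuousAt.sub continuousAt_const).continuousWithinAt)
    (fun x hx => ((hsol x (hs.trans hx.1)).sub_const _).hasDerivWithinAt)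
    (by simp) hB
    (fun x hx => ?_) (show t ∈ Icc s t from ⟨hst, le_rfl⟩)
  · refine this.trans ?_
    have : 0 ≤ C * exp (-(μ / 2 * t)) := by positivity
    linarith
  · have hx0 : 0 ≤ x := hs.trans hx.1
    have hxT : x < T := hx.2.trans_le htT
    have hb := hT x hx0 hxT
    rw [hF _ hb, norm_neg]
    refine (hup _ hb).trans ?_
    rw [mul_assoc]
    refine mul_le_mul_of_nonneg_left ?_ hL
    apply Real.sqrt_le_iff.2
    refine ⟨by positivity, (hdecay x hx0 hxT).trans (le_of_eq ?_)⟩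
    rw [mul_pow, Real.sq_sqrt (hV0 _), ← exp_nat_mul]
    congr 2
    push_cast
    ring

theorem trap_all {V : X → ℝ} {G F : X → X} {q : X} {R μ L : ℝ} (hμ : 0 < μ)
    (hL : 0 ≤ L)
    (hG : ∀ p ∈ ball q R, HasGradientAt V (G p) p)
    (hV0 : ∀ p, 0 ≤ V p)
    (hlow : ∀ p ∈ ball q R, μ * V p ≤ ‖G p‖ ^ 2)
    (hup : ∀ p ∈ ball q R, ‖G p‖ ≤ L * √(V p))
    (hF : ∀ p ∈ ball q R, F p = -G p)
    {sol : ℝ → X} (hsol : ∀ t : ℝ, 0 ≤ t → HasDerivAt sol (F (sol t)) t)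
    (h0 : sol 0 ∈ ball q (R / 2)) (hsmall : (2 * L / μ) * √(V (sol 0)) < R / 2) :
    ∀ t, 0 ≤ t → sol t ∈ ball q R := by
  by_contra! hcon
  obtain ⟨t1, ht1, hbad⟩ := hcon
  set S : Set ℝ := {t | 0 ≤ t ∧ t ≤ t1 ∧ R ≤ dist (sol t) q} with hS
  have hcont : ContinuousOn (fun t => dist (sol t) q) (Icc 0 t1) :=
    fun t ht => Filter.Tendsto.dist (hsol t ht.1).continuousAt.continuousWithinAt tendsto_const_nhds
  have hSc : IsCompact S := by
    have : IsClosed (Icc 0 t1 ∩ (fun t => dist (sol t) q) ⁻¹' (Ici R)) :=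
      hcont.preimage_isClosed_of_isClosed isClosed_Icc isClosed_Ici
    have h2 := (isCompact_Icc (a := (0:ℝ)) (b := t1)).of_isClosed_subset this inter_subset_left
    convert h2 using 1
    ext t
    simp [hS, and_assoc]
  have hne : S.Nonempty := ⟨t1, ht1, le_rfl, by simpa using hbad⟩
  obtain ⟨T, hTS, hTmin⟩ := hSc.exists_isLeast hne
  have hT : ∀ t, 0 ≤ t → t < T → sol t ∈ ball q R := by
    intro t h1 h2
    by_contra h3
    have : T ≤ t := hTmin ⟨h1, h2.le.trans hTS.2.1, by simpa using h3⟩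
    linarith
  have h2 := (trap_interval hμ hL hG hV0 hlow hup hF hsol hT).2 0 T le_rfl hTS.1 le_rfl
  simp only [mul_zero, neg_zero, exp_zero, mul_one] at h2
  have h3 := dist_triangle (sol T) (sol 0) q
  rw [dist_eq_norm (sol T) (sol 0)] at h3
  have := hTS.2.2
  have := mem_ball.1 h0
  linarith

theorem flow_conv {V : X → ℝ} {G F : X → X} {q : X} {R μ L : ℝ} (hμ : 0 < μ)
    (hL : 0 ≤ L)
    (hG : ∀ p ∈ ball q R, HasGradientAt V (G p) p)
    (hV0 : ∀ p, 0 ≤ V p)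
    (hlow : ∀ p ∈ ball q R, μ * V p ≤ ‖G p‖ ^ 2)
    (hup : ∀ p ∈ ball q R, ‖G p‖ ≤ L * √(V p))
    (hF : ∀ p ∈ ball q R, F p = -G p)
    {sol : ℝ → X} (hsol : ∀ t : ℝ, 0 ≤ t → HasDerivAt sol (F (sol t)) t)
    (h0 : sol 0 ∈ ball q (R / 2)) (hsmall : (2 * L / μ) * √(V (sol 0)) < R / 2) :
    ∃ pd ∈ ball q R, V pd = 0 ∧ Filter.Tendsto sol Filter.atTop (nhds pd) := by
  have hin := trap_all hμ hL hG hV0 hlow hup hF hsol h0 hsmall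
  have hT : ∀ T t : ℝ, 0 ≤ t → t < T → sol t ∈ ball q R := fun T t h _ => hin t h
  set C := (2 * L / μ) * √(V (sol 0)) with hC
  have hdist : ∀ s t, 0 ≤ s → s ≤ t → ‖sol t - sol s‖ ≤ C * exp (-(μ / 2 * s)) := fun s t h1 h2 =>
    (trap_interval hμ hL hG hV0 hlow hup hF hsol (hT t)).2 s t h1 h2 le_rfl
  have hexp : ∀ a : ℝ, 0 < a → Filter.Tendsto (fun s : ℝ => exp (-(a * s))) Filter.atTop (nhds 0) := by
    intro a ha
    exact tendsto_exp_neg_atTop_nhds_zero.comp (Filter.tendsto_id.const_mul_atTop ha)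
  have hcauchy : Cauchy (Filter.map sol Filter.atTop) := by
    rw [Metric.cauchy_iff]
    refine ⟨inferInstance, fun ε hε => ?_⟩
    have h1 : Filter.Tendsto (fun s : ℝ => C * exp (-(μ / 2 * s))) Filter.atTop (nhds 0) := by
      simpa using (hexp (μ/2) (by positivity)).const_mul C
    have h2 := (h1.eventually (gt_mem_nhds (show (0:ℝ) < ε / 2 by positivity))).and
      (Filter.eventually_ge_atTop 0)
    obtain ⟨s, hs1, hs2⟩ := h2.exists
    refine ⟨ball (sol s) (ε / 2), ?_, ?_⟩
    · rw [Filter.mem_map]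
      filter_upwards [Filter.eventually_ge_atTop s] with t ht
      rw [mem_preimage, mem_ball, dist_eq_norm]
      exact (hdist s t hs2 ht).trans_lt hs1
    · intro x hx y hy
      have := dist_triangle_right x y (sol s)
      have h1 := mem_ball.1 hx
      have h2 := mem_ball.1 hy
      linarith
  obtain ⟨pd, hpd⟩ := CompleteSpace.complete hcauchy
  have hpd' : Filter.Tendsto sol Filter.atTop (nhds pd) := hpd
  have hball : pd ∈ ball q R := by
    have h1 : Filter.Tendsto (fun t => dist (sol t) (sol 0)) Filter.atTop (nhds (dist pd (sol 0))) :=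
      hpd'.dist tendsto_const_nhds
    have h2 : dist pd (sol 0) ≤ C := by
      refine le_of_tendsto h1 ?_
      filter_upwards [Filter.eventually_ge_atTop 0] with t ht
      have := hdist 0 t le_rfl ht
      simpa [dist_eq_norm] using this
    have h3 := dist_triangle pd (sol 0) q
    have := mem_ball.1 h0
    rw [mem_ball]
    linarith
  refine ⟨pd, hball, ?_, hpd'⟩
  have h1 : Filter.Tendsto (fun t => V (sol t)) Filter.atTop (nhds (V pd)) :=
    (hG pd hball).continuousAt.tendsto.comp hpd'
  have h2 : Filter.Tendsto (fun t : ℝ => V (sol 0) * exp (-(μ * t))) Filter.atTop (nhds 0) := by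
    simpa using (hexp μ hμ).const_mul (V (sol 0))
  refine le_antisymm (le_of_tendsto_of_tendsto h1 h2 ?_) (hV0 _)
  filter_upwards [Filter.eventually_ge_atTop 0] with t ht
  exact (trap_interval hμ hL hG hV0 hlow hup hF hsol (hT (t+1))).1 t ht (by linarith)

/-- Abstract convergence theorem. -/
theorem abstract_conv [FiniteDimensional ℝ X] {V : X → ℝ} {q : X} {S : Set X} {μ L : ℝ} (hμ : 0 < μ)
    (hL : 0 ≤ L) (hV0 : ∀ p, 0 ≤ V p) (hVq : V q = 0)
    (hC2 : ∀ᶠ p in nhds q, ContDiffAt ℝ 2 V p)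
    (hlow : ∀ᶠ p in nhds q, μ * V p ≤ ‖gradient V p‖ ^ 2)
    (hup : ∀ᶠ p in nhds q, ‖gradient V p‖ ≤ L * √(V p))
    (hS : ∀ᶠ p in nhds q, V p = 0 → p ∈ S) :
    ∃ U ∈ nhds q, ∀ P0 ∈ U,
      (∃ sol : ℝ → X, sol 0 = P0 ∧
        ∀ t : ℝ, 0 ≤ t → HasDerivAt sol (-(gradient V (sol t))) t) ∧
      (∀ sol : ℝ → X, sol 0 = P0 →
        (∀ t : ℝ, 0 ≤ t → HasDerivAt sol (-(gradient V (sol t))) t) →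
        ∃ pd ∈ S, Filter.Tendsto sol Filter.atTop (nhds pd)) := by
  obtain ⟨R, hR, hball⟩ := Metric.eventually_nhds_iff_ball.1 (hC2.and (hlow.and (hup.and hS)))
  set R1 := R / 3 with hR1
  have hR1p : 0 < R1 := by positivity
  have hsub : ball q R1 ⊆ ball q R := ball_subset_ball (by linarith)
  have hG : ∀ p ∈ ball q R, HasGradientAt V (gradient V p) p := fun p hp =>
    ((hball p hp).1.differentiableAt (by norm_num)).hasGradientAt
  have hGc : ∀ p ∈ ball q R, ContDiffAt ℝ 1 (gradient V) p := by
    intro p hp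
    have h1 : ContDiffAt ℝ 1 (fderiv ℝ V) p := (hball p hp).1.fderiv_right (by norm_num)
    exact ((InnerProductSpace.toDual ℝ X).symm.toContinuousLinearEquiv.contDiff.contDiffAt).comp p h1
  let χ : ContDiffBump q := ⟨R1, 2 * R1, hR1p, by linarith⟩
  let F : X → X := fun p => χ p • (-(gradient V p))
  have hχc : HasCompactSupport χ := χ.hasCompactSupport
  have hFc : ContDiff ℝ 1 F := by
    rw [contDiff_iff_contDiffAt]
    intro p
    by_cases hp : p ∈ ball q R
    · exact χ.contDiffAt.smul (hGc p hp).neg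
    · have hp' : p ∉ tsupport χ := by
        rw [χ.tsupport_eq]
        simp only [mem_ball, not_lt] at hp
        simp only [mem_closedBall, not_le]
        change 2 * R1 < _
        linarith
      have : F =ᶠ[nhds p] fun _ => 0 := by
        have := notMem_tsupport_iff_eventuallyEq.1 hp'
        filter_upwards [this] with x hx
        simp only [F, hx, Pi.zero_apply, zero_smul]
      exact contDiffAt_const.congr_of_eventuallyEq this
  have hFs : HasCompactSupport F := hχc.smul_right
  obtain ⟨K, hK⟩ := ContDiff.lipschitzWith_of_hasCompactSupport hFs hFc (by norm_num)
  obtain ⟨M, hM⟩ := hFs.exists_bound_of_continuous hFc.continuous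
  have hFG : ∀ p ∈ ball q R1, F p = -gradient V p := by
    intro p hp
    have : χ p = 1 := χ.one_of_mem_closedBall (ball_subset_closedBall hp)
    simp only [F, this, one_smul]
  have hVc : ContinuousAt V q := (hball q (mem_ball_self hR)).1.continuousAt
  have hsm : ∀ᶠ p in nhds q, (2 * L / μ) * √(V p) < R1 / 2 := by
    have : ContinuousAt (fun p => (2 * L / μ) * √(V p)) q :=
      continuousAt_const.mul hVc.sqrt
    refine this.eventually (gt_mem_nhds ?_)
    simp [hVq]; positivity
  refine ⟨_, Filter.inter_mem (ball_mem_nhds q (half_pos hR1p)) hsm, fun P0 hP0 => ⟨?_, ?_⟩⟩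
  · obtain ⟨sol, hs0, hs⟩ := global_exist F K M.toNNReal hK
      (fun x => (hM x).trans (Real.le_coe_toNNReal M)) P0
    refine ⟨sol, hs0, fun t ht => ?_⟩
    have := trap_all hμ hL (fun p hp => hG p (hsub hp)) hV0
      (fun p hp => (hball p (hsub hp)).2.1) (fun p hp => (hball p (hsub hp)).2.2.1) hFG
      (fun t _ => hs t) (by rw [hs0]; exact hP0.1) (by rw [hs0]; exact hP0.2) t ht
    rw [← hFG _ this]
    exact hs t
  · intro sol hs0 hs
    obtain ⟨pd, hpd, hV, hlim⟩ := flow_conv hμ hL (fun p hp => hG p (hsub hp)) hV0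
      (fun p hp => (hball p (hsub hp)).2.1) (fun p hp => (hball p (hsub hp)).2.2.1)
      (F := fun p => -gradient V p) (fun _ _ => rfl)
      hs (by rw [hs0]; exact hP0.1) (by rw [hs0]; exact hP0.2)
    exact ⟨pd, (hball pd (hsub hpd)).2.2.2 hV, hlim⟩

end Dyn


section Loja
open Asymptotics Filter Topology

variable {X : Type*} [NormedAddCommGroup X] [InnerProductSpace ℝ X] [CompleteSpace X]

theorem loja {ι : Type*} (T : Finset ι) (r : ι → X → ℝ) (q : X) (V : X → ℝ)
    (hVr : ∀ p, V p = (1 / 2) * ∑ t ∈ T, (r t p) ^ 2)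
    (hr : ∀ t ∈ T, ContDiffAt ℝ 2 (r t) q) (e : X → X)
    (he : Tendsto e (𝓝 q) (𝓝 q))
    (hre : ∀ᶠ p in 𝓝 q, ∀ t ∈ T, r t (e p) = 0)
    (hO : (fun p => p - e p) =O[𝓝 q] (fun p => √(V p))) :
    (∃ μ > 0, ∀ᶠ p in 𝓝 q, μ * V p ≤ ‖gradient V p‖ ^ 2) ∧
    (∃ L, 0 ≤ L ∧ ∀ᶠ p in 𝓝 q, ‖gradient V p‖ ≤ L * √(V p)) ∧
    (∀ᶠ p in 𝓝 q, ContDiffAt ℝ 2 V p) := by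
  have hV0 : ∀ p, 0 ≤ V p := fun p => by rw [hVr]; positivity
  have hVeq : V = fun p => (1 / 2) * ∑ t ∈ T, (r t p) ^ 2 := funext hVr
  have hrev : ∀ᶠ p in 𝓝 q, ∀ t ∈ T, ContDiffAt ℝ 2 (r t) p := by
    rw [Filter.eventually_all_finset]
    exact fun t ht => (hr t ht).eventually (by simp)
  have hVd : ∀ᶠ p in 𝓝 q, fderiv ℝ V p = ∑ t ∈ T, r t p • fderiv ℝ (r t) p := by
    filter_upwards [hrev] with p hp
    have h1 : HasFDerivAt V ((1 / 2 : ℝ) • ∑ t ∈ T, (2 * r t p) • fderiv ℝ (r t) p) p := by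
      rw [hVeq]
      refine HasFDerivAt.const_mul ?_ _
      refine HasFDerivAt.fun_sum fun t ht => ?_
      have := (((hp t ht).differentiableAt (by norm_num)).hasFDerivAt).pow 2
      simpa using this
    rw [h1.fderiv, Finset.smul_sum]
    refine Finset.sum_congr rfl fun t _ => ?_
    rw [smul_smul]; congr 1; ring
  have hrO : ∀ t ∈ T, (r t) =O[𝓝 q] (fun p => √(V p)) := by
    intro t ht
    refine IsBigO.of_bound (√2) (Eventually.of_forall fun p => ?_)
    rw [Real.norm_of_nonneg (Real.sqrt_nonneg _), ← Real.sqrt_mul (by norm_num),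
      Real.norm_eq_abs, hVr]
    apply Real.abs_le_sqrt
    have := Finset.single_le_sum (f := fun t => (r t p) ^ 2) (fun t _ => sq_nonneg _) ht
    linarith
  have hdc : ∀ t ∈ T, ContinuousAt (fderiv ℝ (r t)) q := fun t ht =>
    ((hr t ht).fderiv_right (m := 1) (by norm_num)).continuousAt
  have hgn : ∀ p, ‖gradient V p‖ = ‖fderiv ℝ V p‖ := fun p => by
    simp [gradient]
  refine ⟨?_, ?_, ?_⟩
  · -- key
    have hlit : ∀ t ∈ T, (fun p => r t p - fderiv ℝ (r t) p (p - e p)) =o[𝓝 q]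
        (fun p => √(V p)) := by
      intro t ht
      have hs := ((hr t ht).hasStrictFDerivAt (by norm_num)).isLittleO
      have htend : Tendsto (fun p => (p, e p)) (𝓝 q) (𝓝 (q, q)) := tendsto_id.prodMk_nhds he
      have h1 : (fun p => r t p - r t (e p) - fderiv ℝ (r t) q (p - e p)) =o[𝓝 q]
          (fun p => p - e p) := hs.comp_tendsto htend
      have h2 : (fun p => (fderiv ℝ (r t) p - fderiv ℝ (r t) q) (p - e p)) =o[𝓝 q]
          (fun p => p - e p) := by
        have ha : (fun p => fderiv ℝ (r t) p - fderiv ℝ (r t) q) =o[𝓝 q] (fun _ => (1 : ℝ)) := by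
          rw [isLittleO_one_iff]
          have := (hdc t ht).tendsto.sub (tendsto_const_nhds (x := fderiv ℝ (r t) q))
          simpa using this
        have hb : (fun p => ‖fderiv ℝ (r t) p - fderiv ℝ (r t) q‖ * ‖p - e p‖) =o[𝓝 q]
          (fun p => (1:ℝ) * ‖p - e p‖) := ha.norm_left.mul_isBigO (isBigO_refl _ _)
        simp only [one_mul] at hb
        refine (IsBigO.of_norm_le fun p => ?_).trans_isLittleO hb.of_norm_right
        exact ContinuousLinearMap.le_opNorm _ _
      refine (((h1.sub h2).trans_isBigO hO).congr' ?_ EventuallyEq.rfl)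
      filter_upwards [hre] with p hp
      rw [hp t ht]
      simp
    have hmain : (fun p => 2 * V p - fderiv ℝ V p (p - e p)) =o[𝓝 q]
        (fun p => √(V p) * √(V p)) := by
      have h1 : (fun p => ∑ t ∈ T, r t p * (r t p - fderiv ℝ (r t) p (p - e p))) =o[𝓝 q]
          (fun p => √(V p) * √(V p)) :=
        IsLittleO.fun_sum fun t ht => (hrO t ht).mul_isLittleO (hlit t ht)
      refine h1.congr' ?_ EventuallyEq.rfl
      filter_upwards [hVd] with p hp
      rw [hp, hVr]
      simp only [_root_.sum_apply, _root_.smul_apply, smul_eq_mul,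
        mul_sub, Finset.sum_sub_distrib]
      ring_nf
    obtain ⟨C, hC, hCb⟩ := hO.exists_pos
    refine ⟨(C ^ 2)⁻¹, by positivity, ?_⟩
    filter_upwards [hmain.bound one_pos, hCb.bound] with p h1 h2
    rw [Real.norm_of_nonneg (Real.sqrt_nonneg _)] at h2
    rw [Real.mul_self_sqrt (hV0 p), Real.norm_of_nonneg (hV0 p), Real.norm_eq_abs] at h1
    have h3 := (abs_le.1 h1).2
    have h4 : fderiv ℝ V p (p - e p) ≤ ‖fderiv ℝ V p‖ * (C * √(V p)) :=
      (Real.le_norm_self _).trans ((ContinuousLinearMap.le_opNorm _ _).trans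
        (mul_le_mul_of_nonneg_left h2 (norm_nonneg _)))
    rw [hgn]
    have h5 : √(V p) * √(V p) = V p := Real.mul_self_sqrt (hV0 p)
    have h6 : √(V p) ≤ ‖fderiv ℝ V p‖ * C := by
      rcases (Real.sqrt_nonneg (V p)).eq_or_lt with h | h
      · rw [← h]; positivity
      · refine le_of_mul_le_mul_right ?_ h
        rw [h5]; linarith
    rw [inv_mul_le_iff₀ (by positivity), ← h5]
    nlinarith [Real.sqrt_nonneg (V p), mul_self_le_mul_self (Real.sqrt_nonneg (V p)) h6]
  · have h1 : (fun p => ∑ t ∈ T, r t p • fderiv ℝ (r t) p) =O[𝓝 q] (fun p => √(V p)) := by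
      refine IsBigO.fun_sum fun t ht => ?_
      have := (hrO t ht).smul ((hdc t ht).isBigO_one ℝ)
      simpa using this
    obtain ⟨L, hL, hLb⟩ := h1.exists_nonneg
    refine ⟨L, hL, ?_⟩
    filter_upwards [hVd, hLb.bound] with p h1 h2
    rw [hgn, h1]
    rwa [Real.norm_of_nonneg (Real.sqrt_nonneg _)] at h2
  · filter_upwards [hrev] with p hp
    rw [hVeq]
    exact contDiffAt_const.mul (ContDiffAt.sum fun t ht => (hp t ht).pow 2)

end Loja

section Geo
open Asymptotics Filter Topology

/-- complex position of an agent -/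
def zc {n : ℕ} (P : Conf n) (i : ℕ) : ℂ := ⟨pt P i 0, pt P i 1⟩

theorem zc_contDiff {n : ℕ} (i : ℕ) : ContDiff ℝ 2 (fun P : Conf n => zc P i) := by
  have h : ∀ d : Fin 2, ContDiff ℝ 2 (fun P : Conf n => pt P i d) := by
    intro d
    unfold pt
    by_cases hi : i < n
    · simp only [hi, dite_true]; fun_prop
    · simp only [hi, dite_false]; fun_prop
  have : (fun P : Conf n => zc P i) =
      fun P => Complex.equivRealProdCLM.symm (pt P i 0, pt P i 1) := by
    funext P; apply Complex.ext <;> simp [zc]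
  rw [this]
  exact Complex.equivRealProdCLM.symm.contDiff.comp ((h 0).prodMk (h 1))

theorem inner_zc {n : ℕ} (P : Conf n) (i j k l : ℕ) :
    inner ℝ (zc P i - zc P j) (zc P k - zc P l) = (pt P i - pt P j) ⬝ᵥ (pt P k - pt P l) := by
  simp [Complex.inner, zc, dotProduct, Fin.sum_univ_two]
  try ring

theorem norm_zc {n : ℕ} (P : Conf n) (i j : ℕ) : ‖zc P i - zc P j‖ = nrm (pt P i - pt P j) := by
  rw [nrm, ← inner_zc, norm_eq_sqrt_real_inner]

theorem angCos_eq {n : ℕ} (P : Conf n) (i j k : ℕ) : angCosP P (i, j, k) =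
    inner ℝ (zc P i - zc P j) (zc P i - zc P k) / (‖zc P i - zc P j‖ * ‖zc P i - zc P k‖) := by
  rw [inner_zc, norm_zc, norm_zc, angCosP, brg, brg]
  simp only [smul_dotProduct, dotProduct_smul, smul_eq_mul]
  rw [div_eq_mul_inv, mul_inv]; ring

theorem angCos_contDiffAt {n : ℕ} (P : Conf n) (i j k : ℕ) (hij : zc P i ≠ zc P j)
    (hik : zc P i ≠ zc P k) : ContDiffAt ℝ 2 (fun P : Conf n => angCosP P (i, j, k)) P := by
  simp only [angCos_eq]
  have h := fun i => (zc_contDiff (n := n) i).contDiffAt (x := P)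
  have h1 := (h i).sub (h j)
  have h2 := (h i).sub (h k)
  have e1 := sub_ne_zero.2 hij
  have e2 := sub_ne_zero.2 hik
  exact (h1.inner ℝ h2).div ((h1.norm ℝ e1).mul (h2.norm ℝ e2))
    (mul_ne_zero (norm_ne_zero_iff.2 e1) (norm_ne_zero_iff.2 e2))

theorem target_inner {n : ℕ} {P Q : Conf n} (h : Q ∈ targetSet P) : ∃ c : ℝ, c ≠ 0 ∧
    ∀ i j k l : ℕ, i < n → j < n → k < n → l < n → inner ℝ (zc Q i - zc Q j) (zc Q k - zc Q l) =
      c ^ 2 * inner ℝ (zc P i - zc P j) (zc P k - zc P l) := by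
  obtain ⟨c, hc, R, hR, ξ, hQ⟩ := h
  refine ⟨c, hc, fun i j k l hi hj hk hl => ?_⟩
  rw [inner_zc, inner_zc, hQ ⟨i, hi⟩, hQ ⟨j, hj⟩, hQ ⟨k, hk⟩, hQ ⟨l, hl⟩]
  have hR' := (Matrix.mem_orthogonalGroup_iff' (Fin 2) ℝ).1 hR
  have h1 : ∀ x y : Vec2, c • R.mulVec x + ξ - (c • R.mulVec y + ξ) = c • R.mulVec (x - y) := by
    intro x y; rw [mulVec_sub, smul_sub]; abel
  rw [h1, h1, smul_dotProduct, dotProduct_smul, dotProduct_mulVec, ← mulVec_transpose,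
    mulVec_mulVec]
  have : Rᵀ * R = 1 := hR'
  rw [this, one_mulVec, smul_eq_mul, smul_eq_mul]; ring

theorem target_norm {n : ℕ} {P Q : Conf n} (h : Q ∈ targetSet P) : ∃ c : ℝ, c ≠ 0 ∧
    (∀ i j k l : ℕ, i < n → j < n → k < n → l < n →
      inner ℝ (zc Q i - zc Q j) (zc Q k - zc Q l) =
      c ^ 2 * inner ℝ (zc P i - zc P j) (zc P k - zc P l)) ∧
    (∀ i j : ℕ, i < n → j < n → ‖zc Q i - zc Q j‖ = |c| * ‖zc P i - zc P j‖) := by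
  obtain ⟨c, hc, hi⟩ := target_inner h
  refine ⟨c, hc, hi, fun i j h1 h2 => ?_⟩
  rw [norm_eq_sqrt_real_inner, hi i j i j h1 h2 h1 h2, Real.sqrt_mul (sq_nonneg c),
    Real.sqrt_sq_eq_abs, ← norm_eq_sqrt_real_inner]

theorem target_ang {n : ℕ} {P Q : Conf n} (h : Q ∈ targetSet P) (i j k : ℕ) (hi : i < n)
    (hj : j < n) (hk : k < n) : angCosP Q (i, j, k) = angCosP P (i, j, k) := by
  obtain ⟨c, hc, h1, h2⟩ := target_norm h
  rw [angCos_eq, angCos_eq, h1 _ _ _ _ hi hj hi hk, h2 _ _ hi hj, h2 _ _ hi hk,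
    ← sq_abs c]
  have : |c| ≠ 0 := abs_ne_zero.2 hc
  rw [show |c| * ‖zc P i - zc P j‖ * (|c| * ‖zc P i - zc P k‖) =
    |c| ^ 2 * (‖zc P i - zc P j‖ * ‖zc P i - zc P k‖) by ring]
  rw [mul_div_mul_left _ _ (pow_ne_zero 2 this)]

theorem target_trans {n : ℕ} {P Q S : Conf n} (h : Q ∈ targetSet P) (h' : S ∈ targetSet Q) :
    S ∈ targetSet P := by
  obtain ⟨c, hc, R, hR, ξ, hQ⟩ := h
  obtain ⟨c', hc', R', hR', ξ', hS⟩ := h'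
  refine ⟨c' * c, mul_ne_zero hc' hc, R' * R, mul_mem hR' hR, c' • R'.mulVec ξ + ξ', fun i => ?_⟩
  rw [hS, hQ, mulVec_add, mulVec_smul, mulVec_mulVec, smul_add, smul_smul, add_assoc]

theorem zc_inj {n : ℕ} {P : Conf n} {i j : ℕ} (h : zc P i = zc P j) : pt P i = pt P j := by
  funext d
  have h1 := congrArg Complex.re h
  have h2 := congrArg Complex.im h
  simp only [zc] at h1 h2
  fin_cases d
  · exact h1
  · exact h2

theorem target_of_complex {n : ℕ} {P Q : Conf n} (a b : ℂ) (ha : a ≠ 0)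
    (h : ∀ i : ℕ, i < n → zc Q i = a * zc P i + b) : Q ∈ targetSet P := by
  have hn : ‖a‖ ≠ 0 := norm_ne_zero_iff.2 ha
  have hsq : a.re * a.re + a.im * a.im = ‖a‖ * ‖a‖ := by
    rw [← Complex.normSq_apply, Complex.normSq_eq_norm_sq]; ring
  refine ⟨‖a‖, hn, !![a.re / ‖a‖, -a.im / ‖a‖; a.im / ‖a‖, a.re / ‖a‖], ?_, ![b.re, b.im], ?_⟩
  · rw [Matrix.mem_orthogonalGroup_iff']
    ext i j
    fin_cases i <;> fin_cases j <;> simp [Matrix.mul_apply, Fin.sum_univ_two] <;> field_simp <;>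
      linarith
  · intro i
    have h1 := congrArg Complex.re (h i i.2)
    have h2 := congrArg Complex.im (h i i.2)
    simp [zc] at h1 h2
    funext d
    fin_cases d
    · simp [dotProduct, Fin.sum_univ_two]
      rw [h1]; field_simp; ring
    · simp [dotProduct, Fin.sum_univ_two]
      rw [h2]; field_simp; ring

theorem noncol {n : ℕ} {P : Conf n} {i j k : ℕ}
    (h : ¬ Collinear ℝ ({pt P i, pt P j, pt P k} : Set Vec2)) : |angCosP P (i, j, k)| ≠ 1 := by
  intro h1
  rw [angCos_eq, abs_real_inner_div_norm_mul_norm_eq_one_iff] at h1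
  obtain ⟨-, r, -, hr⟩ := h1
  apply h
  rw [collinear_iff_of_mem (p₀ := pt P i) (by simp)]
  refine ⟨pt P j - pt P i, ?_⟩
  intro p hp
  simp only [Set.mem_insert_iff, Set.mem_singleton_iff] at hp
  rcases hp with rfl | rfl | rfl
  · exact ⟨0, by simp⟩
  · exact ⟨1, by simp⟩
  · refine ⟨r, ?_⟩
    have h1 := congrArg Complex.re hr
    have h2 := congrArg Complex.im hr
    simp [zc] at h1 h2
    funext d
    fin_cases d
    · simp; linarith
    · simp; linarith

theorem cos_complex (u ζ : ℂ) (hu : u ≠ 0) :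
    inner ℝ u (ζ * u) / (‖u‖ * ‖ζ * u‖) = ζ.re / ‖ζ‖ := by
  have hn : ‖u‖ ≠ 0 := norm_ne_zero_iff.2 hu
  have hsq : u.re * u.re + u.im * u.im = ‖u‖ * ‖u‖ := by
    rw [← Complex.normSq_apply, Complex.normSq_eq_norm_sq]; ring
  have : inner ℝ u (ζ * u) = (‖u‖ * ‖u‖) * ζ.re := by
    rw [← hsq]; simp [Complex.inner]; ring
  rw [this, norm_mul, show ‖u‖ * (‖ζ‖ * ‖u‖) = (‖u‖ * ‖u‖) * ‖ζ‖ by ring,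
    mul_div_mul_left _ _ (mul_ne_zero hn hn)]

/-- cotangent from cosine -/
def cotc (c : ℝ) : ℝ := c / √(1 - c ^ 2)

theorem cotc_eq (x y : ℝ) (hy : y ≠ 0) : cotc (x / ‖(⟨x, y⟩ : ℂ)‖) = x / |y| ∧
    (x / ‖(⟨x, y⟩ : ℂ)‖) ^ 2 < 1 := by
  set N := ‖(⟨x, y⟩ : ℂ)‖ with hN
  have hNN : N * N = x * x + y * y := by
    have := Complex.normSq_eq_norm_sq (⟨x, y⟩ : ℂ)
    rw [Complex.normSq_apply] at this
    simp only at this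
    rw [hN]; linarith
  have hy2 : 0 < y * y := mul_self_pos.2 hy
  have hNp : 0 < N := by
    have : N ≠ 0 := by
      intro h0; rw [h0] at hNN; nlinarith [mul_self_nonneg x]
    exact lt_of_le_of_ne (norm_nonneg _) this.symm
  have h1 : 1 - (x / N) ^ 2 = (|y| / N) ^ 2 := by
    rw [div_pow, div_pow, sq_abs]
    field_simp
    nlinarith
  have hy' : 0 < |y| := abs_pos.2 hy
  constructor
  · rw [cotc, h1, Real.sqrt_sq (by positivity)]
    field_simp
  · have : 0 < (|y| / N) ^ 2 := by positivity
    linarith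

/-- reconstruct the shape of a triangle from the two cosines -/
def Psi (s : ℝ) (c : ℝ × ℝ) : ℂ :=
  ((cotc c.1 / (cotc c.1 + cotc c.2) : ℝ) : ℂ) + ((s / (cotc c.1 + cotc c.2) : ℝ) : ℂ) * Complex.I

theorem Psi_eq (s : ℝ) (hs : s = 1 ∨ s = -1) (ζ : ℂ) (h : 0 < s * ζ.im) :
    Psi s (ζ.re / ‖ζ‖, (1 - ζ).re / ‖1 - ζ‖) = ζ ∧
    (ζ.re / ‖ζ‖) ^ 2 < 1 ∧ ((1 - ζ).re / ‖1 - ζ‖) ^ 2 < 1 ∧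
    cotc (ζ.re / ‖ζ‖) + cotc ((1 - ζ).re / ‖1 - ζ‖) ≠ 0 := by
  have hy : ζ.im ≠ 0 := by rintro h0; simp [h0] at h
  have hy2 : (1 - ζ).im ≠ 0 := by simpa using hy
  have h1 := cotc_eq ζ.re ζ.im hy
  have h2 := cotc_eq (1 - ζ).re (1 - ζ).im hy2
  simp only [Complex.eta] at h1 h2
  have hy3 : |(1 - ζ).im| = |ζ.im| := by simp
  have habs : |ζ.im| = s * ζ.im := by
    rcases hs with rfl | rfl
    · rw [one_mul] at *; exact abs_of_pos h
    · rw [abs_of_neg (by linarith)]; ring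
  rw [hy3, habs] at h2
  rw [habs] at h1
  have hs0 : s ≠ 0 := by rcases hs with rfl | rfl <;> norm_num
  have hss : s * s = 1 := by rcases hs with rfl | rfl <;> norm_num
  have hsum : cotc (ζ.re / ‖ζ‖) + cotc ((1 - ζ).re / ‖1 - ζ‖) = 1 / (s * ζ.im) := by
    rw [h1.1, h2.1]; simp; field_simp; ring
  refine ⟨?_, h1.2, h2.2, by rw [hsum]; positivity⟩
  rw [Psi]
  simp only
  rw [hsum, h1.1]
  apply Complex.ext
  · simp only [Complex.add_re, Complex.mul_re, Complex.ofReal_re, Complex.ofReal_im, Complex.I_re,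
      Complex.I_im]
    field_simp
    ring
  · simp only [Complex.add_im, Complex.mul_im, Complex.ofReal_re, Complex.ofReal_im, Complex.I_re,
      Complex.I_im]
    field_simp
    linear_combination ζ.im * hss

theorem Psi_diff (s : ℝ) (c : ℝ × ℝ) (h1 : c.1 ^ 2 < 1) (h2 : c.2 ^ 2 < 1)
    (h3 : cotc c.1 + cotc c.2 ≠ 0) : DifferentiableAt ℝ (Psi s) c := by
  have hc : ∀ x : ℝ, x ^ 2 < 1 → DifferentiableAt ℝ cotc x := by
    intro x hx
    have : 1 - x ^ 2 ≠ 0 := by linarith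
    unfold cotc
    refine DifferentiableAt.div differentiableAt_id (DifferentiableAt.sqrt (by fun_prop) this) ?_
    rw [Real.sqrt_ne_zero']; linarith
  have d1 : DifferentiableAt ℝ (fun c : ℝ × ℝ => cotc c.1) c :=
    (hc _ h1).comp c differentiableAt_fst
  have d2 : DifferentiableAt ℝ (fun c : ℝ × ℝ => cotc c.2) c :=
    (hc _ h2).comp c differentiableAt_snd
  have d12 : DifferentiableAt ℝ (fun c : ℝ × ℝ => cotc c.1 + cotc c.2) c := d1.fun_add d2
  have d3 : DifferentiableAt ℝ (fun c : ℝ × ℝ => cotc c.1 / (cotc c.1 + cotc c.2)) c :=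
    by
    have hh := @DifferentiableAt.fun_inv ℝ _ (ℝ × ℝ) _ _ ℝ _ _ (fun c : ℝ × ℝ => cotc c.1 + cotc c.2) c d12 h3
    simp only [div_eq_mul_inv]
    exact d1.fun_mul hh
  have d4 : DifferentiableAt ℝ (fun c : ℝ × ℝ => s / (cotc c.1 + cotc c.2)) c :=
    by
    have hh := @DifferentiableAt.fun_inv ℝ _ (ℝ × ℝ) _ _ ℝ _ _ (fun c : ℝ × ℝ => cotc c.1 + cotc c.2) c d12 h3
    simp only [div_eq_mul_inv]
    exact (differentiableAt_const s).fun_mul hh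
  unfold Psi
  exact ((Complex.ofRealCLM.differentiableAt.comp c d3).fun_add
    ((Complex.ofRealCLM.differentiableAt.comp c d4).mul_const _))

theorem shape_bigO {n : ℕ} {q : Conf n} {i j k : ℕ} {ρ : Conf n → ℝ}
    (hij : zc q i ≠ zc q j) (hik : zc q i ≠ zc q k) (hjk : zc q j ≠ zc q k)
    (hcol : |angCosP q (i, j, k)| ≠ 1)
    (h1 : (fun p => angCosP p (i, j, k) - angCosP q (i, j, k)) =O[𝓝 q] ρ)
    (h2 : (fun p => angCosP p (j, i, k) - angCosP q (j, i, k)) =O[𝓝 q] ρ) :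
    (fun p => (zc p k - zc p i) / (zc p j - zc p i) - (zc q k - zc q i) / (zc q j - zc q i))
      =O[𝓝 q] ρ := by
  set Z : Conf n → ℂ := fun p => (zc p k - zc p i) / (zc p j - zc p i) with hZ
  have hc : ∀ i, ContinuousAt (fun P : Conf n => zc P i) q := fun i =>
    (zc_contDiff i).continuous.continuousAt
  have hZc : ContinuousAt Z q :=
    ((hc k).sub (hc i)).div ((hc j).sub (hc i)) (sub_ne_zero.2 hij.symm)
  have form : ∀ p : Conf n, zc p i ≠ zc p j →
      angCosP p (i, j, k) = (Z p).re / ‖Z p‖ ∧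
      angCosP p (j, i, k) = (1 - Z p).re / ‖1 - Z p‖ := by
    intro p hp
    have hne : zc p j - zc p i ≠ 0 := sub_ne_zero.2 hp.symm
    have hne' : zc p i - zc p j ≠ 0 := sub_ne_zero.2 hp
    constructor
    · rw [angCos_eq, ← cos_complex (zc p i - zc p j) (Z p) hne']
      have : Z p * (zc p i - zc p j) = zc p i - zc p k := by
        rw [hZ]; field_simp; ring
      rw [this]
    · rw [angCos_eq, ← cos_complex (zc p j - zc p i) (1 - Z p) hne]
      have : (1 - Z p) * (zc p j - zc p i) = zc p j - zc p k := by
        rw [hZ]; field_simp; ring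
      rw [this]
  have him : (Z q).im ≠ 0 := by
    intro h0
    apply hcol
    rw [(form q hij).1]
    have hre : Z q = ((Z q).re : ℂ) := by apply Complex.ext <;> simp [h0]
    have hne : Z q ≠ 0 := div_ne_zero (sub_ne_zero.2 hik.symm) (sub_ne_zero.2 hij.symm)
    have : ‖Z q‖ = |(Z q).re| := by rw [hre, Complex.norm_real]; simp
    rw [abs_div, abs_norm, ← this]
    exact div_self (norm_ne_zero_iff.2 hne)
  obtain ⟨s, hs, hpos⟩ : ∃ s : ℝ, (s = 1 ∨ s = -1) ∧ 0 < s * (Z q).im := by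
    rcases lt_or_gt_of_ne him with h | h
    · exact ⟨-1, Or.inr rfl, by linarith⟩
    · exact ⟨1, Or.inl rfl, by linarith⟩
  have hev1 : ∀ᶠ p in 𝓝 q, 0 < s * (Z p).im := by
    have : ContinuousAt (fun p => s * (Z p).im) q :=
      continuousAt_const.mul (Complex.continuous_im.continuousAt.comp hZc)
    exact this.eventually (lt_mem_nhds hpos)
  have hev2 : ∀ᶠ p in 𝓝 q, zc p i ≠ zc p j := by
    filter_upwards [((hc i).sub (hc j)).eventually_ne (sub_ne_zero.2 hij)] with p hp
    exact sub_ne_zero.1 hp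
  set A : Conf n → ℝ × ℝ := fun p => (angCosP p (i, j, k), angCosP p (j, i, k)) with hA
  have hAc : ContinuousAt A q := (angCos_contDiffAt q i j k hij hik).continuousAt.prodMk
    (angCos_contDiffAt q j i k hij.symm hjk).continuousAt
  have hAq : A q = ((Z q).re / ‖Z q‖, (1 - Z q).re / ‖1 - Z q‖) := by
    rw [hA]; simp only; rw [(form q hij).1, (form q hij).2]
  obtain ⟨g1, g2, g3, g4⟩ := Psi_eq s hs (Z q) hpos
  have hd : DifferentiableAt ℝ (Psi s) (A q) := by
    rw [hAq]; exact Psi_diff s _ g2 g3 g4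
  have hb : (fun p => Psi s (A p) - Psi s (A q)) =O[𝓝 q] (fun p => A p - A q) :=
    hd.isBigO_sub.comp_tendsto hAc.tendsto
  have hb2 : (fun p => A p - A q) =O[𝓝 q] ρ := h1.prod_left h2
  refine (hb.trans hb2).congr' ?_ EventuallyEq.rfl
  filter_upwards [hev1, hev2] with p hp1 hp2
  have e1 : A p = ((Z p).re / ‖Z p‖, (1 - Z p).re / ‖1 - Z p‖) := by
    rw [hA]; simp only; rw [(form p hp2).1, (form p hp2).2]
  rw [e1, (Psi_eq s hs (Z p) hp1).1, hAq, g1]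

end Geo

section Final
open Asymptotics Filter Topology

theorem tl_lt {m : ℕ} {F : Finset (ℕ × ℕ)} (h : IsTLGraph m F) :
    2 ≤ m ∧ (0, 1) ∈ F ∧ ∀ e ∈ F, e.1 < m ∧ e.2 < m := by
  induction h with
  | base => simp
  | @step m F i j hF hij ih =>
    obtain ⟨h1, h2, h3⟩ := ih
    have hh := h3 _ hij
    simp only at hh
    refine ⟨by omega, by simp [h2], ?_⟩
    intro e he
    simp only [Finset.mem_union, Finset.mem_insert, Finset.mem_singleton] at he
    rcases he with he | rfl | rfl | rfl | rfl
    · have := h3 e he; omega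
    all_goals simp only; omega

/-- build a configuration from complex positions -/
def mkC (n : ℕ) (f : ℕ → ℂ) : Conf n :=
  WithLp.toLp 2 (fun x : Fin n × Fin 2 => if x.2 = 0 then (f x.1).re else (f x.1).im)

theorem zc_mkC {n : ℕ} (f : ℕ → ℂ) (i : ℕ) (hi : i < n) : zc (mkC n f) i = f i := by
  apply Complex.ext <;> simp [zc, mkC, pt, hi]

theorem conf_bigO {n : ℕ} {l : Filter (Conf n)} (e : Conf n → Conf n) (ρ : Conf n → ℝ)
    (h : ∀ i < n, (fun p => zc p i - zc (e p) i) =O[l] ρ) :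
    (fun p => p - e p) =O[l] ρ := by
  refine (ContinuousLinearEquiv.isBigO_comp_rev
    (PiLp.continuousLinearEquiv 2 ℝ (fun _ : Fin n × Fin 2 => ℝ)) _ l).trans ?_
  rw [isBigO_pi]
  rintro ⟨i, d⟩
  refine IsBigO.trans (IsBigO.of_norm_le fun p => ?_) (h i i.2).norm_left
  fin_cases d
  · have := Complex.abs_re_le_norm (zc p i - zc (e p) i)
    simpa [zc, pt] using this
  · have := Complex.abs_im_le_norm (zc p i - zc (e p) i)
    simpa [zc, pt] using this

theorem tl_bigO {n : ℕ} {q : Conf n} {ρ : Conf n → ℝ} {m : ℕ} {F : Finset (ℕ × ℕ)}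
    (h : IsTLGraph m F)
    (h01 : zc q 0 ≠ zc q 1)
    (hsh : ∀ i j k : ℕ, i < k → j < k → (i, j) ∈ F → (i, k) ∈ F → (j, k) ∈ F → 
      zc q i ≠ zc q j ∧
      (fun p => (zc p k - zc p i) / (zc p j - zc p i) - (zc q k - zc q i) / (zc q j - zc q i))
      =O[𝓝 q] ρ) :
    ∀ i < m, (fun p => zc p i - ((zc p 1 - zc p 0) / (zc q 1 - zc q 0) * (zc q i - zc q 0)
      + zc p 0)) =O[𝓝 q] ρ := by
  induction h with
  | base =>
    intro i hi
    have hne : zc q 1 - zc q 0 ≠ 0 := sub_ne_zero.2 h01.symm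
    have : (fun p : Conf n => zc p i - ((zc p 1 - zc p 0) / (zc q 1 - zc q 0) * (zc q i - zc q 0)
      + zc p 0)) = fun _ => 0 := by
      funext p
      interval_cases i
      · simp
      · field_simp; ring
    rw [this]
    exact isBigO_zero _ _
  | @step m F i j hF hij ih =>
    have ih' := ih (fun a b c h1 h2 h3 h4 h5 => hsh a b c h1 h2 (Finset.mem_union_left _ h3)
      (Finset.mem_union_left _ h4) (Finset.mem_union_left _ h5))
    intro k hk
    rcases Nat.lt_succ_iff_lt_or_eq.1 hk with hk | rfl
    · exact ih' k hk
    have hlt := (tl_lt hF).2.2 _ hij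
    simp only at hlt
    obtain ⟨hne, hO⟩ := hsh i j k hlt.1 hlt.2 (Finset.mem_union_left _ hij)
      (by simp) (by simp)
    have hi := ih' i hlt.1
    have hj := ih' j hlt.2
    have hc : ∀ i, ContinuousAt (fun P : Conf n => zc P i) q := fun i =>
      (zc_contDiff i).continuous.continuousAt
    have hne' : zc q j - zc q i ≠ 0 := sub_ne_zero.2 hne.symm
    have hbd : (fun p : Conf n => zc p j - zc p i) =O[𝓝 q] (fun _ => (1 : ℝ)) :=
      ((hc j).sub (hc i)).isBigO_one ℝ
    have t1 := hO.mul hbd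
    simp only [mul_one] at t1
    have t2 := (hj.sub hi).const_mul_left ((zc q k - zc q i) / (zc q j - zc q i))
    refine ((hi.add t1).add t2).congr' ?_ EventuallyEq.rfl
    have hev : ∀ᶠ p in 𝓝 q, zc p j - zc p i ≠ 0 := ((hc j).sub (hc i)).eventually_ne hne'
    filter_upwards [hev] with p hp
    have e1 : (zc p k - zc p i) / (zc p j - zc p i) * (zc p j - zc p i) = zc p k - zc p i :=
      div_mul_cancel₀ _ hp
    have e2 : (zc q k - zc q i) / (zc q j - zc q i) * (zc q j - zc q i) = zc q k - zc q i :=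
      div_mul_cancel₀ _ hne'
    linear_combination e1 - (zc p 1 - zc p 0) / (zc q 1 - zc q 0) * e2

end Final


/-- under Assumption 1 (the graph contains a spanning triangulated Laman
subgraph whose target framework is strongly nondegenerate), every point of the target
shape set `𝓔 = 𝒮_{p*}` has a neighborhood `U` such that from every initial condition in
`U` a global solution of the gradient flow `ṗ = −∇V_F(p)` exists, and every such
solution converges to some point of `𝓔`. -/
theorem formation_gradient_flow_locally_converges
    {n : ℕ} (hn : 3 ≤ n) (E : Finset (ℕ × ℕ))
    (hV : ∀ e ∈ E, e.1 < n ∧ e.2 < n)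
    (hsym : ∀ e ∈ E, (e.2, e.1) ∈ E)
    (hirr : ∀ e ∈ E, e.1 ≠ e.2)
    (TF : Finset (ℕ × ℕ × ℕ))
    (hTF : ∀ t : ℕ × ℕ × ℕ, t ∈ TF ↔
      ((t.1, t.2.1) ∈ E ∧ (t.2.1, t.2.2) ∈ E ∧ (t.1, t.2.2) ∈ E ∧
        t.1 < t.2.2 ∧ t.2.1 < t.2.2))
    (Pstar : Conf n)
    (hPs : ∀ e ∈ E, pt Pstar e.1 ≠ pt Pstar e.2)
    -- Assumption 1: a spanning triangulated Laman subgraph, strongly nondegenerate at p*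
    (EL : Finset (ℕ × ℕ)) (hTL : IsTLGraph n EL) (hsub : ∀ e ∈ EL, e ∈ E)
    (hsnd : StronglyNondegP EL Pstar) :
    ∀ q ∈ targetSet Pstar, ∃ U ∈ nhds q, ∀ P0 ∈ U,
      (∃ sol : ℝ → Conf n, sol 0 = P0 ∧
        ∀ t : ℝ, 0 ≤ t → HasDerivAt sol (-(gradient (VF TF Pstar) (sol t))) t) ∧
      (∀ sol : ℝ → Conf n, sol 0 = P0 →
        (∀ t : ℝ, 0 ≤ t → HasDerivAt sol (-(gradient (VF TF Pstar) (sol t))) t) →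
        ∃ pd ∈ targetSet Pstar, Filter.Tendsto sol Filter.atTop (nhds pd)) := by
  intro q hq
  have hTE : ∀ t ∈ TF, t.1 < n ∧ t.2.1 < n ∧ t.2.2 < n := by
    intro t ht
    obtain ⟨h1, h2, -⟩ := (hTF t).1 ht
    exact ⟨(hV _ h1).1, (hV _ h1).2, (hV _ h2).2⟩
  have hang : ∀ Q ∈ targetSet Pstar, ∀ t ∈ TF, angCosP Q t = angCosP Pstar t := by
    rintro Q hQ ⟨i, j, k⟩ ht
    obtain ⟨h1, h2, h3⟩ := hTE _ ht
    exact target_ang hQ i j k h1 h2 h3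
  have hdist : ∀ i j : ℕ, (i, j) ∈ E → zc q i ≠ zc q j := by
    intro i j hij h
    obtain ⟨c, hc, -, h2⟩ := target_norm hq
    have h3 := h2 i j (hV _ hij).1 (hV _ hij).2
    rw [h, sub_self, norm_zero] at h3
    have h4 : ‖zc Pstar i - zc Pstar j‖ = 0 := by
      rcases mul_eq_zero.1 h3.symm with h5 | h5
      · exact absurd h5 (abs_ne_zero.2 hc)
      · exact h5
    exact hPs _ hij (zc_inj (sub_eq_zero.1 (norm_eq_zero.1 h4)))
  set V : Conf n → ℝ := VF TF Pstar with hVdef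
  set r : ℕ × ℕ × ℕ → Conf n → ℝ := fun t p => angCosP p t - angCosP Pstar t with hrdef
  have hVr : ∀ p, V p = (1 / 2) * ∑ t ∈ TF, (r t p) ^ 2 := fun p => rfl
  have hV0 : ∀ p, 0 ≤ V p := fun p => by
    rw [hVr]; exact mul_nonneg (by norm_num) (Finset.sum_nonneg fun t _ => sq_nonneg _)
  have hVz : ∀ Q ∈ targetSet Pstar, V Q = 0 := by
    intro Q hQ
    rw [hVr, Finset.sum_eq_zero, mul_zero]
    intro t ht
    simp only [hrdef]
    rw [hang Q hQ t ht]; ring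
  have hr : ∀ t ∈ TF, ContDiffAt ℝ 2 (r t) q := by
    rintro ⟨i, j, k⟩ ht
    obtain ⟨h1, h2, h3, -⟩ := (hTF _).1 ht
    exact (angCos_contDiffAt q i j k (hdist _ _ h1) (hdist _ _ h3)).sub contDiffAt_const
  have hrO : ∀ t ∈ TF, (r t) =O[nhds q] (fun p => √(V p)) := by
    intro t ht
    refine Asymptotics.IsBigO.of_bound (√2) (Filter.Eventually.of_forall fun p => ?_)
    rw [Real.norm_of_nonneg (Real.sqrt_nonneg _), ← Real.sqrt_mul (by norm_num),
      Real.norm_eq_abs, hVr]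
    apply Real.abs_le_sqrt
    have := Finset.single_le_sum (f := fun t => (r t p) ^ 2) (fun t _ => sq_nonneg _) ht
    linarith
  have hrO' : ∀ t ∈ TF, (fun p => angCosP p t - angCosP q t) =O[nhds q] (fun p => √(V p)) := by
    intro t ht
    rw [hang q hq t ht]
    exact hrO t ht
  have h01 : zc q 0 ≠ zc q 1 := hdist _ _ (hsub _ (tl_lt hTL).2.1)
  have h01' : zc q 1 - zc q 0 ≠ 0 := sub_ne_zero.2 h01.symm
  have hmain := tl_bigO (ρ := fun p => √(V p)) hTL h01 (by
    intro i j k hik hjk e1 e2 e3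
    have g1 := hsub _ e1
    have g2 := hsub _ e2
    have g3 := hsub _ e3
    have t1 : (i, j, k) ∈ TF := (hTF _).2 ⟨g1, g3, g2, hik, hjk⟩
    have t2 : (j, i, k) ∈ TF := (hTF _).2 ⟨hsym _ g1, g2, g3, hjk, hik⟩
    refine ⟨hdist _ _ g1, shape_bigO (hdist _ _ g1) (hdist _ _ g2) (hdist _ _ g3) ?_
      (hrO' _ t1) (hrO' _ t2)⟩
    rw [hang q hq _ t1]
    exact noncol (hsnd i j k e1 e3 e2))
  set a : Conf n → ℂ := fun p => (zc p 1 - zc p 0) / (zc q 1 - zc q 0) with ha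
  set e : Conf n → Conf n := fun p => mkC n (fun i => a p * (zc q i - zc q 0) + zc p 0) with he
  have hO : (fun p => p - e p) =O[nhds q] (fun p => √(V p)) := by
    apply conf_bigO
    intro i hi
    have := hmain i hi
    refine this.congr_left fun p => ?_
    simp only [he]
    rw [zc_mkC _ i hi]
  have hc : ∀ i, ContinuousAt (fun P : Conf n => zc P i) q := fun i =>
    (zc_contDiff i).continuous.continuousAt
  have hac : ContinuousAt a q := ((hc 1).sub (hc 0)).div_const _
  have haq : a q ≠ 0 := by simp only [ha]; rw [div_self h01']; exact one_ne_zero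
  have hane : ∀ᶠ p in nhds q, a p ≠ 0 := hac.eventually_ne haq
  have het : ∀ᶠ p in nhds q, e p ∈ targetSet Pstar := by
    filter_upwards [hane] with p hp
    refine target_trans hq (target_of_complex (a p) (zc p 0 - a p * zc q 0) hp fun i hi => ?_)
    simp only [he]
    rw [zc_mkC _ i hi]; ring
  have hVc : ContinuousAt V q := by
    have : V = fun p => (1 / 2) * ∑ t ∈ TF, (r t p) ^ 2 := funext hVr
    rw [this]
    exact (tendsto_finsetSum TF fun t ht => (hr t ht).continuousAt.pow 2).const_mul _
  have hsq : Filter.Tendsto (fun p => √(V p)) (nhds q) (nhds 0) := by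
    have h := hVc.sqrt.tendsto
    simpa [hVz q hq] using h
  have heT : Filter.Tendsto e (nhds q) (nhds q) := by
    have h1 : Filter.Tendsto (fun p => p - e p) (nhds q) (nhds 0) := hO.trans_tendsto hsq
    have h2 := (Filter.tendsto_id (x := nhds q)).sub h1
    simpa using h2
  have hre : ∀ᶠ p in nhds q, ∀ t ∈ TF, r t (e p) = 0 := by
    filter_upwards [het] with p hp t ht
    simp only [hrdef]
    rw [hang _ hp t ht, sub_self]
  obtain ⟨⟨μ, hμ, hlow⟩, ⟨L, hL, hup⟩, hC2⟩ := loja TF r q V hVr hr e heT hre hO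
  refine abstract_conv hμ hL hV0 (hVz q hq) hC2 hlow hup ?_
  obtain ⟨C, hCb⟩ := hO.bound
  filter_upwards [het, hCb] with p h1 h2 h3
  rw [h3, Real.sqrt_zero, norm_zero, mul_zero] at h2
  have h4 : p = e p := sub_eq_zero.1 (norm_le_zero_iff.1 h2)
  rw [h4]; exact h1
end
end
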